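/- arXiv:1311.5163 — 4 statements merged into one kernel-verified Lean document; each statement's English description precedes it below -/
import Mathlib

section
/- Let p be an odd prime, r > 1 an integer, and K an abelian number field of conductor p^r, of degree n over ℚ and with D_K the absolute value of the discriminant of K. Then M(K) ≤ 2^{-n} · √(D_K). -/
open NumberField

/-- The Euclidean minimum of a number field `K`:
`M(K) = sup_{x ∈ K} inf_{c ∈ O_K} |N_{K/ℚ}(x − c)|`. -/
noncomputable def euclideanMinimum (K : Type*) [Field K] [NumberField K] : ℝ :=
  ⨆ x : K, ⨅ c : 𝓞 K, |((Algebra.norm ℚ (x - (c : K)) : ℚ) : ℝ)|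

/-- A number field `K` has conductor `f` if `f` is the smallest positive integer such that
`K` embeds into the `f`-th cyclotomic field `ℚ(ζ_f)`.  (Such a `K` is automatically an
abelian extension of `ℚ`.) -/
def HasConductor (K : Type*) [Field K] [NumberField K] (f : ℕ+) : Prop :=
  Nonempty (K →ₐ[ℚ] CyclotomicField f ℚ) ∧
    ∀ m : ℕ+, Nonempty (K →ₐ[ℚ] CyclotomicField m ℚ) → f ≤ m


/-- sq distance -/
noncomputable def gg (v : ℝ) : ℝ := (Int.fract v - 1/2)^2

lemma gg_periodic : Function.Periodic gg 1 := by
  intro v; simp [gg]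

lemma gg_le (v : ℝ) : gg v ≤ (v - 1/2)^2 := by
  unfold gg
  have h := Int.floor_add_fract v
  have h0 := Int.fract_nonneg v
  have h1 := Int.fract_lt_one v
  set f := Int.fract v
  rw [← h]
  rcases lt_trichotomy ⌊v⌋ 0 with hn | hn | hn
  · have : (⌊v⌋ : ℝ) ≤ -1 := by exact_mod_cast (by omega : ⌊v⌋ ≤ -1)
    nlinarith
  · rw [hn]; simp
  · have : (1 : ℝ) ≤ ⌊v⌋ := by exact_mod_cast hn
    nlinarith

lemma gg_int : ∫ t in (0:ℝ)..1, gg t = 1/12 := by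
  have : ∫ t in (0:ℝ)..1, gg t = ∫ t in (0:ℝ)..1, (t - 1/2)^2 := by
    apply intervalIntegral.integral_congr_ae
    have : ∀ᵐ t : ℝ, t ≠ 1 := by simp [MeasureTheory.ae_iff]
    filter_upwards [this] with t ht hm
    rw [Set.uIoc_of_le zero_le_one] at hm
    unfold gg
    rw [Int.fract_eq_self.2 ⟨hm.1.le, lt_of_le_of_ne hm.2 ht⟩]
  rw [this, intervalIntegral.integral_comp_sub_right (fun t => t^2), integral_pow]
  norm_num

lemma gg_meas : Measurable gg := by
  unfold gg
  exact ((measurable_fract).sub_const _).pow_const _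

lemma gg_bound (v : ℝ) : ‖gg v‖ ≤ 1 := by
  unfold gg
  have h0 := Int.fract_nonneg v
  have h1 := Int.fract_lt_one v
  rw [Real.norm_eq_abs, abs_le]; constructor <;> nlinarith

lemma gg_comp_intble (a b x y : ℝ) : IntervalIntegrable (fun t => gg (x - y * t)) MeasureTheory.volume a b := by
  refine (intervalIntegrable_const (c := (1:ℝ))).mono_fun ?_ ?_
  · exact (gg_meas.comp (by fun_prop)).aestronglyMeasurable
  · filter_upwards with t; simpa using gg_bound _

lemma gg_intble (a b : ℝ) : IntervalIntegrable gg MeasureTheory.volume a b := by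
  refine (intervalIntegrable_const (c := (1:ℝ))).mono_fun ?_ ?_
  · exact gg_meas.aestronglyMeasurable
  · filter_upwards with t; simpa using gg_bound _

lemma gg_comp_int (x : ℝ) (p : ℕ) (hp : p ≠ 0) : ∫ t in (0:ℝ)..1, gg (x - p * t) = 1/12 := by
  have hp' : (p:ℝ) ≠ 0 := by exact_mod_cast hp
  rw [intervalIntegral.integral_comp_sub_mul _ hp']
  have h := gg_periodic.intervalIntegral_add_zsmul_eq (p:ℤ) (x - p) gg_intble
  rw [gg_periodic.intervalIntegral_add_eq _ 0, zero_add, gg_int] at h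
  simp at h
  simp only [mul_one, mul_zero, sub_zero]
  rw [h]; simp; field_simp

/-- Rounding lemma. -/
lemma rounding {ι κ : Type*} [Fintype ι] [Fintype κ] [DecidableEq κ] (f : ι → κ) (p : ℕ) (hp : p ≠ 0)
    (hf : ∀ b, (Finset.univ.filter (fun i => f i = b)).card = p) (x : ι → ℝ) :
    ∃ t : ℝ, (p:ℝ) * ∑ i, (Int.fract (x i - t) - 1/2)^2
      - ∑ b, (∑ i with f i = b, (Int.fract (x i - t) - 1/2))^2 ≤ (p * Fintype.card ι - Fintype.card κ) / 12 := by
  have key : ∃ t : ℝ, (p:ℝ) * ∑ i, gg (x i - ((1:ℕ):ℝ) * t)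
      - ∑ b, gg ((∑ i with f i = b, x i) - p/2 + 1/2 - p * t) ≤ (p * Fintype.card ι - Fintype.card κ) / 12 := by
    let F : ℝ → ℝ := fun t => (p:ℝ) * ∑ i, gg (x i - ((1:ℕ):ℝ) * t)
      - ∑ b, gg ((∑ i with f i = b, x i) - p/2 + 1/2 - p * t)
    have hI1 : IntervalIntegrable (fun t => (p:ℝ) * ∑ i, gg (x i - ((1:ℕ):ℝ) * t)) MeasureTheory.volume 0 1 := by
      apply IntervalIntegrable.const_mul
      have := IntervalIntegrable.sum (μ := MeasureTheory.volume) (a := 0) (b := 1) Finset.univ (f := fun i t => gg (x i - ((1:ℕ):ℝ) * t)) (fun i _ => gg_comp_intble 0 1 _ _)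
      have e : ∀ g h : ℝ → ℝ, g = h → IntervalIntegrable g MeasureTheory.volume 0 1 → IntervalIntegrable h MeasureTheory.volume 0 1 := fun g h e hh => e ▸ hh
      exact e _ _ (by ext t; simp) this
    have hI2 : IntervalIntegrable (fun t => ∑ b, gg ((∑ i with f i = b, x i) - p/2 + 1/2 - p * t)) MeasureTheory.volume 0 1 := by
      have := IntervalIntegrable.sum (μ := MeasureTheory.volume) (a := 0) (b := 1) Finset.univ (f := fun b t => gg ((∑ i with f i = b, x i) - p/2 + 1/2 - p * t)) (fun i _ => gg_comp_intble 0 1 _ _)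
      have e : ∀ g h : ℝ → ℝ, g = h → IntervalIntegrable g MeasureTheory.volume 0 1 → IntervalIntegrable h MeasureTheory.volume 0 1 := fun g h e hh => e ▸ hh
      exact e _ _ (by ext t; simp) this
    have hint : ∫ t in (0:ℝ)..1, F t = (p * Fintype.card ι - Fintype.card κ) / 12 := by
      simp only [F]
      rw [intervalIntegral.integral_sub hI1 hI2, intervalIntegral.integral_const_mul,
        intervalIntegral.integral_finsetSum (fun i _ => gg_comp_intble 0 1 _ _),
        intervalIntegral.integral_finsetSum (fun i _ => gg_comp_intble 0 1 _ _)]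
      simp_rw [gg_comp_int _ p hp, gg_comp_int _ 1 one_ne_zero]
      simp; ring
    rw [intervalIntegral.integral_of_le zero_le_one] at hint
    have hi : MeasureTheory.Integrable F (MeasureTheory.volume.restrict (Set.Ioc 0 1)) := by
      have := hI1.sub hI2
      rwa [intervalIntegrable_iff_integrableOn_Ioc_of_le zero_le_one] at this
    have : MeasureTheory.IsProbabilityMeasure (MeasureTheory.volume.restrict (Set.Ioc (0:ℝ) 1)) := ⟨by simp⟩
    obtain ⟨t, ht⟩ := MeasureTheory.exists_le_integral hi
    exact ⟨t, by rw [hint] at ht; exact ht⟩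
  obtain ⟨t, ht⟩ := key
  refine ⟨t, le_trans ?_ ht⟩
  have h1 : ∀ i, gg (x i - ((1:ℕ):ℝ) * t) = (Int.fract (x i - t) - 1/2)^2 := by
    intro i; simp [gg]
  simp_rw [h1]
  gcongr with b _
  have h2 : (∑ i with f i = b, (Int.fract (x i - t) - 1/2)) =
     ((∑ i with f i = b, x i) - p/2 - p * t) - ((∑ i with f i = b, ⌊x i - t⌋ : ℤ) : ℝ) := by
    have : ∀ i, Int.fract (x i - t) - 1/2 = x i - (⌊x i - t⌋ : ℝ) - (t + 1/2) := by
      intro i; rw [Int.fract]; ring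
    simp_rw [this]
    rw [Finset.sum_sub_distrib, Finset.sum_sub_distrib, Finset.sum_const, hf]
    push_cast; simp; ring
  rw [h2]
  have h3 := gg_le ((∑ i with f i = b, x i) - p/2 + 1/2 - p * t - ((∑ i with f i = b, ⌊x i - t⌋ : ℤ) : ℝ))
  have h4 : gg ((∑ i with f i = b, x i) - p/2 + 1/2 - p * t - ((∑ i with f i = b, ⌊x i - t⌋ : ℤ) : ℝ)) =
     gg ((∑ i with f i = b, x i) - p/2 + 1/2 - p * t) := by
    unfold gg; rw [Int.fract_sub_intCast]
  rw [h4] at h3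
  refine h3.trans (le_of_eq ?_)
  ring

lemma parseval (q : ℕ) [NeZero q] (S : ZMod q → ℝ) :
    ∑ k : ZMod q, ‖∑ b : ZMod q, (S b : ℂ) * ZMod.stdAddChar (k * b)‖^2 = q * ∑ b, (S b)^2 := by
  have : ((∑ k : ZMod q, ‖∑ b : ZMod q, (S b : ℂ) * ZMod.stdAddChar (k * b)‖^2 : ℝ) : ℂ) = ((q * ∑ b, (S b)^2 : ℝ) : ℂ) := by
    push_cast
    simp_rw [← Complex.mul_conj', map_sum, map_mul, Complex.conj_ofReal, ← AddChar.map_neg_eq_conj, Finset.sum_mul_sum]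
    have h1 : ∀ k b c : ZMod q, (S b : ℂ) * ZMod.stdAddChar (k * b) * ((S c : ℂ) * ZMod.stdAddChar (-(k * c))) = (S b : ℂ) * S c * ZMod.stdAddChar (k * (b - c)) := by
      intro k b c
      rw [mul_sub, sub_eq_add_neg, AddChar.map_add_eq_mul]; ring
    simp_rw [h1]
    rw [Finset.sum_comm, Finset.mul_sum]
    refine Finset.sum_congr rfl fun b _ => ?_
    rw [Finset.sum_comm]
    simp_rw [← Finset.mul_sum, AddChar.sum_mulShift _ (ZMod.isPrimitive_stdAddChar q), sub_eq_zero]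
    simp [ZMod.card]; ring
  exact_mod_cast this

lemma parseval' {ι : Type*} [Fintype ι] (q : ℕ) [NeZero q] (f : ι → ZMod q) (y : ι → ℝ) :
    ∑ k : ZMod q, ‖∑ i, (y i : ℂ) * ZMod.stdAddChar (k * f i)‖^2 = q * ∑ b, (∑ i with f i = b, y i)^2 := by
  rw [← parseval]
  refine Finset.sum_congr rfl fun k _ => ?_
  congr 2
  rw [← Finset.sum_fiberwise Finset.univ f]
  refine Finset.sum_congr rfl fun b _ => ?_
  rw [Complex.ofReal_sum, Finset.sum_mul]
  refine Finset.sum_congr rfl fun i hi => ?_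
  rw [(Finset.mem_filter.1 hi).2]

lemma stdAddChar_mul (p q : ℕ) [NeZero p] [NeZero q] [NeZero (q * p)] (k i : ZMod (q * p)) :
    ZMod.stdAddChar ((p : ZMod (q * p)) * k * i) = ZMod.stdAddChar (((k.cast : ZMod q)) * (i.cast : ZMod q)) := by
  obtain ⟨a, rfl⟩ := ZMod.intCast_surjective k
  obtain ⟨b, rfl⟩ := ZMod.intCast_surjective i
  rw [ZMod.cast_intCast (dvd_mul_right q p), ZMod.cast_intCast (dvd_mul_right q p)]
  have := ZMod.stdAddChar_coe (N := q * p) (p * a * b)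
  have h2 := ZMod.stdAddChar_coe (N := q) (a * b)
  push_cast at this h2
  rw [this, h2]
  congr 1
  have : (p : ℂ) ≠ 0 := NeZero.ne _
  have : (q : ℂ) ≠ 0 := NeZero.ne _
  field_simp

/-- the trace form bound -/
lemma traceForm (p q : ℕ) [NeZero p] [NeZero q] [NeZero (q * p)] (y : ZMod (q * p) → ℝ) (A : Finset (ZMod (q * p)))
    (hA : ∀ k ∈ A, ∀ j, k ≠ p * j) :
    ∑ k ∈ A, ‖∑ i, (y i : ℂ) * ZMod.stdAddChar (k * i)‖^2 ≤
      (q * p : ℝ) * ∑ i, (y i)^2 - q * ∑ b : ZMod q, (∑ i with (i.cast : ZMod q) = b, y i)^2 := by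
  have h1 := parseval (q * p) y
  have h2 := parseval' q (fun i : ZMod (q * p) => (i.cast : ZMod q)) y
  let e : ZMod q → ZMod (q * p) := fun k => (p : ZMod (q*p)) * (k.val : ZMod (q * p))
  have he : Function.Injective e := by
    intro a b hab
    simp only [e] at hab
    norm_cast at hab
    rw [ZMod.natCast_eq_natCast_iff] at hab
    have hab' : p * a.val ≡ p * b.val [MOD p * q] := by rwa [mul_comm p q]
    have := Nat.ModEq.mul_left_cancel' (NeZero.ne p) hab'
    rw [← ZMod.natCast_eq_natCast_iff] at this
    simpa using this
  have h3 : ∑ k ∈ Finset.univ.image e, ‖∑ i, (y i : ℂ) * ZMod.stdAddChar (k * i)‖^2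
     = ∑ k : ZMod q, ‖∑ i : ZMod (q * p), (y i : ℂ) * ZMod.stdAddChar (k * (i.cast : ZMod q))‖^2 := by
    rw [Finset.sum_image (by intro a _ b _ h; exact he h)]
    refine Finset.sum_congr rfl fun k _ => ?_
    congr 3
    ext i
    simp only [e]
    rw [stdAddChar_mul, ZMod.cast_natCast (dvd_mul_right q p), ZMod.natCast_zmod_val]
  have hd : Disjoint A (Finset.univ.image e) := by
    rw [Finset.disjoint_left]
    intro k hk hk'
    obtain ⟨j, -, rfl⟩ := Finset.mem_image.1 hk'
    exact hA _ hk _ rfl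
  have h4 : ∑ k ∈ A ∪ Finset.univ.image e, ‖∑ i, (y i : ℂ) * ZMod.stdAddChar (k * i)‖^2 ≤ ∑ k, ‖∑ i, (y i : ℂ) * ZMod.stdAddChar (k * i)‖^2 :=
    Finset.sum_le_sum_of_subset_of_nonneg (Finset.subset_univ _) (fun _ _ _ => by positivity)
  rw [Finset.sum_union hd, h3, h2, h1] at h4
  push_cast at h4
  linarith

lemma fiber_card (p q : ℕ) [NeZero p] [NeZero q] [NeZero (q * p)] (b : ZMod q) :
   (Finset.univ.filter (fun i : ZMod (q * p) => (i.cast : ZMod q) = b)).card = p := by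
  have hs : Function.Surjective (ZMod.castHom (dvd_mul_right q p) (ZMod q)) := ZMod.castHom_surjective _
  have key : ∀ b b' : ZMod q, (Finset.univ.filter (fun i : ZMod (q * p) => ZMod.castHom (dvd_mul_right q p) (ZMod q) i = b)).card = (Finset.univ.filter (fun i : ZMod (q * p) => ZMod.castHom (dvd_mul_right q p) (ZMod q) i = b')).card := by
    intro b b'
    obtain ⟨c, hc⟩ := hs (b' - b)
    refine Finset.card_bij (fun i _ => i + c) ?_ ?_ ?_
    · intro i hi; simp only [Finset.mem_filter, Finset.mem_univ, true_and] at hi ⊢; rw [map_add, hi, hc]; ring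
    · intro i _ j _ h; simpa using h
    · intro i hi; simp only [Finset.mem_filter, Finset.mem_univ, true_and] at hi ⊢
      exact ⟨i - c, by rw [map_sub, hi, hc]; ring, by ring⟩
  have h1 := Finset.card_eq_sum_card_fiberwise (f := ZMod.castHom (dvd_mul_right q p) (ZMod q)) (s := Finset.univ) (t := Finset.univ) (by simp)
  rw [Finset.sum_congr rfl (fun b' _ => key b' b)] at h1
  simp only [Finset.card_univ, ZMod.card, Finset.sum_const, smul_eq_mul] at h1
  exact (Nat.eq_of_mul_eq_mul_left (NeZero.pos q) h1).symm


lemma amgm {ι : Type*} [Fintype ι] [Nonempty ι] (F : ι → ℝ) (hF : ∀ i, 0 ≤ F i) :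
    ∏ i, F i ≤ ((∑ i, F i) / Fintype.card ι) ^ Fintype.card ι := by
  have hc : (0:ℝ) < Fintype.card ι := by exact_mod_cast Fintype.card_pos
  have h := Real.geom_mean_le_arith_mean Finset.univ (fun _ => (1:ℝ)) F (by simp) (by simpa using hc) (fun i _ => hF i)
  simp only [Real.rpow_one, Finset.sum_const, Finset.card_univ, nsmul_eq_mul, mul_one, one_mul] at h
  have h0 : 0 ≤ ∏ i, F i := Finset.prod_nonneg fun i _ => hF i
  calc ∏ i, F i = ((∏ i, F i) ^ ((Fintype.card ι : ℝ)⁻¹)) ^ Fintype.card ι := by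
        rw [Real.rpow_inv_natCast_pow h0 Fintype.card_ne_zero]
    _ ≤ _ := by gcongr

lemma embedding_char {L : Type*} [Field L] [Algebra ℚ L] (p q : ℕ) (hp : 1 < p) [NeZero q] [NeZero (q * p)]
    {ζ : L} (hζ : IsPrimitiveRoot ζ (q * p)) (σ : L →ₐ[ℚ] ℂ) :
    ∃ k : ZMod (q * p), (∀ j, k ≠ p * j) ∧ ∀ i : ZMod (q * p), σ (ζ ^ i.val) = ZMod.stdAddChar (k * i) := by
  have hσ : IsPrimitiveRoot (σ ζ) (q * p) := hζ.map_of_injective σ.injective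
  have h1 : IsPrimitiveRoot (ZMod.stdAddChar (1 : ZMod (q * p))) (q * p) := by
    have := Complex.isPrimitiveRoot_exp (q * p) (NeZero.ne _)
    have h2 := ZMod.stdAddChar_coe (N := q * p) 1
    push_cast at h2 this
    rw [h2]; simpa using this
  obtain ⟨j, -, hj⟩ := h1.eq_pow_of_pow_eq_one hσ.pow_eq_one
  have hj' : ZMod.stdAddChar (j : ZMod (q * p)) = σ ζ := by
    rw [← hj, ← AddChar.map_nsmul_eq_pow]; simp
  refine ⟨j, ?_, ?_⟩
  · intro a ha
    have : (σ ζ) ^ q = 1 := by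
      rw [← hj', ha, ← AddChar.map_nsmul_eq_pow, nsmul_eq_mul, ← mul_assoc, ← Nat.cast_mul, ZMod.natCast_self]; simp
    have := hσ.dvd_of_pow_eq_one _ this
    have h3 := Nat.le_of_dvd (NeZero.pos q) this
    have := NeZero.pos q
    nlinarith
  · intro i
    rw [map_pow, ← hj', ← AddChar.map_nsmul_eq_pow]; simp [mul_comm]

lemma normBound {L : Type*} [Field L] [NumberField L] (p q : ℕ) (hp : 1 < p) [NeZero q] [NeZero p] [NeZero (q * p)]
    {ζ : L} (hζ : IsPrimitiveRoot ζ (q * p)) [IsCyclotomicExtension {q * p} ℚ L]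
    (hL : Module.finrank ℚ L = q * (p - 1)) (x : ZMod (q * p) → ℚ) :
    ∃ t : ℝ, |((Algebra.norm ℚ (∑ i, ((x i - ⌊(x i : ℝ) - t⌋ : ℚ) : L) * ζ ^ i.val) : ℚ) : ℝ)| ^ 2
      ≤ ((q * (p + 1) : ℝ) / 12) ^ Module.finrank ℚ L := by
  obtain ⟨t, ht⟩ := rounding (fun i : ZMod (q * p) => (i.cast : ZMod q)) p (NeZero.ne p) (fiber_card p q) (fun i => (x i : ℝ))
  refine ⟨t, ?_⟩
  set z : L := ∑ i, ((x i - ⌊(x i : ℝ) - t⌋ : ℚ) : L) * ζ ^ i.val with hz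
  set y : ZMod (q * p) → ℝ := fun i => Int.fract ((x i : ℝ) - t) - 1/2 with hy
  choose k hk1 hk2 using fun σ : L →ₐ[ℚ] ℂ => embedding_char p q hp hζ σ
  have hkinj : Function.Injective k := by
    intro σ τ h
    have : σ ζ = τ ζ := by
      have h1 := hk2 σ 1
      have h2 := hk2 τ 1
      rw [h, ← h2] at h1
      have h3 : 1 < q * p := by have := NeZero.pos q; nlinarith
      have : Fact (1 < q * p) := ⟨h3⟩
      simpa [ZMod.val_one] using h1
    apply (hζ.powerBasis ℚ).algHom_ext
    simpa using this
  have hσz : ∀ σ : L →ₐ[ℚ] ℂ, σ z = ∑ i, (y i : ℂ) * ZMod.stdAddChar (k σ * i) := by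
    intro σ
    have h0 : ∑ i, ZMod.stdAddChar (k σ * i) = (0:ℂ) := by
      simp_rw [mul_comm (k σ)]
      rw [AddChar.sum_mulShift _ (ZMod.isPrimitive_stdAddChar _)]
      have := hk1 σ 0
      simp at this
      simp [this]
    rw [hz, map_sum]
    have : ∀ i, σ (((x i - ⌊(x i : ℝ) - t⌋ : ℚ) : L) * ζ ^ i.val) = (y i : ℂ) * ZMod.stdAddChar (k σ * i) + (t + 1/2) * ZMod.stdAddChar (k σ * i) := by
      intro i
      rw [map_mul, hk2, ← add_mul]
      congr 1
      simp only [hy, Int.fract, map_ratCast]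
      push_cast
      ring
    simp_rw [this]
    rw [Finset.sum_add_distrib, ← Finset.mul_sum, h0]; simp
  have hcard : Fintype.card (L →ₐ[ℚ] ℂ) = Module.finrank ℚ L := AlgHom.card ℚ L ℂ
  have hsum : ∑ σ : L →ₐ[ℚ] ℂ, ‖σ z‖^2 ≤ (q:ℝ)^2 * (p^2 - 1) / 12 := by
    have h := traceForm p q y (Finset.univ.image k) (by
      intro a ha
      obtain ⟨σ, -, rfl⟩ := Finset.mem_image.1 ha
      exact hk1 σ)
    rw [Finset.sum_image (fun _ _ _ _ h => hkinj h)] at h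
    simp_rw [hσz]
    refine h.trans ?_
    have hq : (0:ℝ) ≤ q := by positivity
    simp only [ZMod.card] at ht
    have := mul_le_mul_of_nonneg_left ht hq
    push_cast at this
    simp only [hy]
    linarith
  have hnorm : |((Algebra.norm ℚ z : ℚ) : ℝ)| ^ 2 = ∏ σ : L →ₐ[ℚ] ℂ, ‖σ z‖^2 := by
    rw [Finset.prod_pow, ← norm_prod, ← Algebra.norm_eq_prod_embeddings ℚ ℂ z]
    simp
  rw [hnorm]
  have : Nonempty (L →ₐ[ℚ] ℂ) := Fintype.card_pos_iff.1 (by rw [hcard]; exact Module.finrank_pos)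
  refine (amgm _ (fun _ => by positivity)).trans ?_
  rw [hcard]
  refine pow_le_pow_left₀ (by positivity) ?_ _
  rw [hL, div_le_iff₀]
  · refine hsum.trans (le_of_eq ?_)
    push_cast [Nat.cast_sub hp.le]
    ring
  · have := NeZero.pos q
    have : 0 < q * (p-1) := by apply Nat.mul_pos <;> omega
    exact_mod_cast this


lemma units_ker_card {d n : ℕ} [NeZero n] [NeZero d] (h : d ∣ n) (c : ℕ) (hc : n.totient = d.totient * c) :
    Nat.card (ZMod.unitsMap h).ker = c := by
  have h1 := Subgroup.index_mul_card (ZMod.unitsMap h).ker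
  rw [Subgroup.index_ker, MonoidHom.range_eq_top.2 (ZMod.unitsMap_surjective h), Subgroup.card_top,
    Nat.card_eq_fintype_card, Nat.card_eq_fintype_card, Nat.card_eq_fintype_card, ZMod.card_units_eq_totient, ZMod.card_units_eq_totient, hc] at h1
  rw [Nat.card_eq_fintype_card]
  exact Nat.eq_of_mul_eq_mul_left (Nat.totient_pos.2 (NeZero.pos d)) h1

lemma pow_mem_ker {L : Type*} [Field L] {a b n : ℕ} [NeZero n] (hn : a * b = n) (ha : a ≠ 0) {ζ : L}
    (hζ : IsPrimitiveRoot ζ n) (u : (ZMod n)ˣ) (h : (ζ ^ (u : ZMod n).val) ^ a = ζ ^ a) :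
    u ∈ (ZMod.unitsMap (Dvd.intro_left a hn : b ∣ n)).ker := by
  rw [MonoidHom.mem_ker]
  ext
  rw [ZMod.unitsMap_def]
  simp only [Units.coe_map, MonoidHom.coe_coe, Units.val_one]
  rw [← pow_mul] at h
  have h1 : (u : ZMod n).val * a ≡ a [MOD n] := by
    have := (IsOfFinOrder.pow_eq_pow_iff_modEq (isOfFinOrder_iff_pow_eq_one.2 ⟨n, NeZero.pos n, hζ.pow_eq_one⟩)).1 h
    rwa [← hζ.eq_orderOf] at this
  have h2 : a * (u : ZMod n).val ≡ a * 1 [MOD a * b] := by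
    rw [hn, mul_one, mul_comm]; exact h1
  have h3 := Nat.ModEq.mul_left_cancel' ha h2
  rw [← ZMod.natCast_eq_natCast_iff] at h3
  rw [Nat.cast_one] at h3
  rw [← h3]
  conv_lhs => rw [← ZMod.natCast_zmod_val (u : ZMod n)]
  rw [map_natCast]

lemma not_dvd_gal {K L : Type*} [Field K] [NumberField K] [Field L] [NumberField L] [Algebra K L]
    (p s : ℕ) [hp : Fact p.Prime] (hp2 : p ≠ 2) (hs : 1 ≤ s) [IsCyclotomicExtension {p ^ (s + 1)} ℚ L]
    {ζ : L} (hζ : IsPrimitiveRoot ζ (p ^ (s + 1)))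
    (hnot : ¬ Nonempty (K →ₐ[ℚ] CyclotomicField (p ^ s) ℚ)) :
    ¬ p ∣ Nat.card (L ≃ₐ[K] L) := by
  classical
  intro hdvd
  apply hnot
  have : NeZero (p ^ (s+1)) := ⟨(pow_pos hp.out.pos _).ne'⟩
  have : NeZero (p ^ s) := ⟨(pow_pos hp.out.pos _).ne'⟩
  have : IsGalois ℚ L := IsCyclotomicExtension.isGalois {p ^ (s+1)} ℚ L
  obtain ⟨g, hg⟩ := exists_prime_orderOf_dvd_card' p hdvd
  have hcyc : IsCyclic (ZMod (p ^ (s+1)))ˣ := ZMod.isCyclic_units_of_prime_pow p hp.out hp2 _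
  set a := hζ.autToPow K with ha
  have hn : p * p ^ s = p ^ (s + 1) := (pow_succ' p s).symm
  have hainj : Function.Injective a := by
    intro σ τ h
    have h1 := hζ.autToPow_spec K σ
    have h2 := hζ.autToPow_spec K τ
    rw [← ha] at h1 h2
    rw [h, h2] at h1
    have h3 : (σ.restrictScalars ℚ).toAlgHom = (τ.restrictScalars ℚ).toAlgHom := by
      apply (hζ.powerBasis ℚ).algHom_ext
      simpa using h1.symm
    ext x
    exact DFunLike.congr_fun h3 x
  have hker : ∀ u ∈ (ZMod.unitsMap (Dvd.intro_left p hn : p ^ s ∣ p ^ (s+1))).ker, ∃ σ, a σ = u := by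
    intro u hu
    have hup : u ^ p = 1 := by
      have h1 := units_ker_card (Dvd.intro_left p hn : p ^ s ∣ p ^ (s+1)) p (by
        obtain ⟨s, rfl⟩ := Nat.exists_eq_add_of_le' hs
        rw [Nat.totient_prime_pow_succ hp.out, Nat.totient_prime_pow_succ hp.out]; ring)
      have h2 := pow_card_eq_one' (x := (⟨u, hu⟩ : (ZMod.unitsMap (Dvd.intro_left p hn : p ^ s ∣ p ^ (s+1))).ker))
      rw [h1] at h2
      simpa using congrArg Subtype.val h2
    have hle := IsCyclic.card_pow_eq_one_le (α := (ZMod (p ^ (s+1)))ˣ) hp.out.pos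
    let Z : Finset (ZMod (p ^ (s+1)))ˣ := (Finset.range p).image (fun j => a (g ^ j))
    have hZc : Z.card = p := by
      rw [Finset.card_image_of_injOn, Finset.card_range]
      intro i hi j hj hij
      have := hainj hij
      exact pow_injOn_Iio_orderOf (by simpa [hg] using hi) (by simpa [hg] using hj) this
    have hZs : Z ⊆ Finset.univ.filter (fun a : (ZMod (p ^ (s+1)))ˣ => a ^ p = 1) := by
      intro x hx
      obtain ⟨j, -, rfl⟩ := Finset.mem_image.1 hx
      simp only [Finset.mem_filter, Finset.mem_univ, true_and]
      rw [← map_pow, ← pow_mul, mul_comm, pow_mul, orderOf_dvd_iff_pow_eq_one.1 hg.dvd, one_pow, map_one]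
    have hZe := Finset.eq_of_subset_of_card_le hZs (by rw [hZc]; exact hle)
    have : u ∈ Z := by rw [hZe]; simp [hup]
    obtain ⟨j, -, h⟩ := Finset.mem_image.1 this
    exact ⟨_, h⟩
  let ι : K →ₐ[ℚ] L := IsScalarTower.toAlgHom ℚ K L
  have hle : ι.fieldRange ≤ IntermediateField.adjoin ℚ {ζ ^ p} := by
    rw [← IsGalois.fixedField_fixingSubgroup (IntermediateField.adjoin ℚ {ζ ^ p})]
    rintro _ ⟨x, rfl⟩
    rw [IntermediateField.mem_fixedField_iff]
    intro τ hτ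
    rw [IntermediateField.mem_fixingSubgroup_iff] at hτ
    have hτζ : τ (ζ ^ p) = ζ ^ p := hτ _ (IntermediateField.mem_adjoin_simple_self ℚ _)
    have hspec := hζ.autToPow_spec ℚ τ
    obtain ⟨σ, hσ⟩ := hker _ (pow_mem_ker hn hp.out.ne_zero hζ (hζ.autToPow ℚ τ) (by
      rw [hspec, ← map_pow, hτζ]))
    have h2 := hζ.autToPow_spec K σ
    rw [← ha, hσ, hspec] at h2
    have h3 : τ.toAlgHom = (σ.restrictScalars ℚ).toAlgHom := by
      apply (hζ.powerBasis ℚ).algHom_ext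
      simpa using h2
    have h4 : τ (ι x) = σ (ι x) := DFunLike.congr_fun h3 (ι x)
    have h5 : σ (algebraMap K L x) = algebraMap K L x := σ.commutes x
    exact h4.trans h5
  have hprim : IsPrimitiveRoot (ζ ^ p) (p ^ s) := hζ.pow (NeZero.pos _) hn.symm
  have hcy : IsCyclotomicExtension {p ^ s} ℚ (IntermediateField.adjoin ℚ {ζ ^ p}) :=
    hprim.intermediateField_adjoin_isCyclotomicExtension ℚ
  have hcz : NeZero (((p ^ s : ℕ) : ℕ) : ℚ) := ⟨Nat.cast_ne_zero.2 (NeZero.ne _)⟩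
  have hcy2 : IsCyclotomicExtension {p ^ s} ℚ (CyclotomicField (p ^ s) ℚ) := CyclotomicField.isCyclotomicExtension (p ^ s) ℚ
  let e := IsCyclotomicExtension.algEquiv {p ^ s} ℚ (IntermediateField.adjoin ℚ {ζ ^ p}) (CyclotomicField (p ^ s) ℚ)
  exact ⟨e.toAlgHom.comp ((IntermediateField.inclusion hle).comp ι.rangeRestrict)⟩

lemma gal_facts {K L : Type*} [Field K] [NumberField K] [Field L] [NumberField L] [Algebra K L]
    (p s : ℕ) [hp : Fact p.Prime] [IsCyclotomicExtension {p ^ (s + 1)} ℚ L]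
    {ζ : L} (hζ : IsPrimitiveRoot ζ (p ^ (s + 1)))
    (hnd : ¬ p ∣ Nat.card (L ≃ₐ[K] L)) :
    Nat.card (L ≃ₐ[K] L) ≤ p - 1 ∧
    ∀ σ : L ≃ₐ[K] L, σ ζ ≠ ζ → IsPrimitiveRoot (σ ζ * ζ⁻¹) (p ^ (s + 1)) := by
  have : NeZero (p ^ (s+1)) := ⟨(pow_pos hp.out.pos _).ne'⟩
  have : NeZero (p ^ s) := ⟨(pow_pos hp.out.pos _).ne'⟩
  have hn : p ^ s * p = p ^ (s + 1) := (pow_succ p s).symm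
  have key : ∀ σ : L ≃ₐ[K] L, hζ.autToPow K σ ∈ (ZMod.unitsMap (Dvd.intro_left _ hn : p ∣ p ^ (s+1))).ker → σ = 1 := by
    intro σ hσ
    have h1 := units_ker_card (Dvd.intro_left _ hn : p ∣ p ^ (s+1)) (p ^ s) (by
      rw [Nat.totient_prime_pow_succ hp.out, Nat.totient_prime hp.out]; ring)
    have h2 := pow_card_eq_one' (x := (⟨_, hσ⟩ : (ZMod.unitsMap (Dvd.intro_left _ hn : p ∣ p ^ (s+1))).ker))
    rw [h1] at h2
    have h3 : hζ.autToPow K σ ^ (p ^ s) = 1 := by simpa using congrArg Subtype.val h2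
    have hainj : Function.Injective (hζ.autToPow K) := by
      intro σ τ h
      have h1 := hζ.autToPow_spec K σ
      have h2 := hζ.autToPow_spec K τ
      rw [h, h2] at h1
      have h3 : (σ.restrictScalars ℚ).toAlgHom = (τ.restrictScalars ℚ).toAlgHom := by
        apply (hζ.powerBasis ℚ).algHom_ext
        simpa using h1.symm
      ext x
      exact DFunLike.congr_fun h3 x
    have h4 : σ ^ (p ^ s) = 1 := hainj (by rw [map_pow, h3, map_one])
    have h5 : Nat.Coprime (p ^ s) (Nat.card (L ≃ₐ[K] L)) := ((Nat.Prime.coprime_iff_not_dvd hp.out).2 hnd).pow_left s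
    have h6 := Nat.Coprime.eq_one_of_dvd (h5.coprime_dvd_left (orderOf_dvd_of_pow_eq_one h4)) (orderOf_dvd_natCard σ)
    exact orderOf_eq_one_iff.1 h6
  constructor
  · have hinj : Function.Injective ((ZMod.unitsMap (Dvd.intro_left _ hn : p ∣ p ^ (s+1))).comp (hζ.autToPow K)) := by
      rw [injective_iff_map_eq_one]
      intro σ hσ
      exact key σ (by rw [MonoidHom.mem_ker]; exact hσ)
    have := Nat.card_le_card_of_injective _ hinj
    rwa [Nat.card_eq_fintype_card (α := (ZMod p)ˣ), ZMod.card_units_eq_totient, Nat.totient_prime hp.out] at this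
  · intro σ hσ
    have hζ0 : ζ ≠ 0 := hζ.ne_zero (NeZero.ne _)
    have h1 : orderOf (σ ζ * ζ⁻¹) = p ^ (s+1) := by
      apply orderOf_eq_prime_pow
      · intro h
        apply hσ
        rw [mul_pow, inv_pow, mul_inv_eq_one₀ (pow_ne_zero _ hζ0)] at h
        have := key σ (pow_mem_ker hn (NeZero.ne _) hζ _ (by rw [hζ.autToPow_spec K σ]; exact h))
        rw [this]; rfl
      · rw [mul_pow, ← map_pow, inv_pow, hζ.pow_eq_one]; simp
    rw [← h1]; exact IsPrimitiveRoot.orderOf _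


lemma norm_diff {L : Type*} [Field L] [NumberField L] (p s : ℕ) [hp : Fact p.Prime] (hp2 : p ≠ 2)
    [IsCyclotomicExtension {p ^ (s + 1)} ℚ L] {ζ β : L} (hζ : IsPrimitiveRoot ζ (p ^ (s + 1)))
    (hβ : IsPrimitiveRoot (β * ζ⁻¹) (p ^ (s + 1))) : |Algebra.norm ℚ (ζ - β)| = p := by
  have hm : p ^ (s+1) ≠ 0 := (pow_pos hp.out.pos _).ne'
  have hζ0 : ζ ≠ 0 := hζ.ne_zero hm
  have h1 : ζ - β = (-1) * ζ * (β * ζ⁻¹ - 1) := by field_simp; ring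
  have h2 := hβ.norm_sub_one_of_prime_ne_two (K := ℚ) (Polynomial.cyclotomic.irreducible_rat (pow_pos hp.out.pos _)) hp2
  have h3 : |Algebra.norm ℚ ζ| = 1 := by
    have := congrArg (fun x => |Algebra.norm ℚ x|) hζ.pow_eq_one
    simp only [map_pow, map_one, abs_pow, abs_one] at this
    exact (pow_eq_one_iff_of_nonneg (abs_nonneg _) hm).1 this
  have h4 : |Algebra.norm ℚ (-1 : L)| = 1 := by
    have : (-1 : L) = algebraMap ℚ L (-1) := by simp
    rw [this, Algebra.norm_algebraMap, abs_pow]; simp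
  rw [h1, map_mul, map_mul, abs_mul, abs_mul, h2, h3, h4]; simp

open NumberField in
lemma disc_bound {K L : Type*} [Field K] [NumberField K] [Field L] [NumberField L] [Algebra K L]
    (p s : ℕ) [hp : Fact p.Prime] (hp2 : p ≠ 2) [IsCyclotomicExtension {p ^ (s + 1)} ℚ L]
    {ζ : L} (hζ : IsPrimitiveRoot ζ (p ^ (s + 1))) [IsGalois K L]
    (hσ : ∀ σ : L ≃ₐ[K] L, σ ζ ≠ ζ → IsPrimitiveRoot (σ ζ * ζ⁻¹) (p ^ (s + 1))) :
    (discr L).natAbs ≤ p ^ (Module.finrank K L - 1) * (discr K).natAbs ^ Module.finrank K L := by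
  classical
  have : NeZero (p ^ (s+1)) := ⟨(pow_pos hp.out.pos _).ne'⟩
  rw [natAbs_discr_eq_absNorm_differentIdeal_mul_natAbs_discr_pow K (𝓞 K) L (𝓞 L)]
  gcongr
  let x : 𝓞 L := hζ.toInteger
  have hx : algebraMap (𝓞 L) L x = ζ := rfl
  have htop : Algebra.adjoin K {ζ} = ⊤ := by
    have h0 := IsCyclotomicExtension.adjoin_primitive_root_eq_top (A := ℚ) (B := L) hζ
    rw [eq_top_iff]
    intro z _
    have hz : z ∈ Algebra.adjoin ℚ {ζ} := by rw [h0]; trivial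
    have : Algebra.adjoin ℚ {ζ} ≤ (Algebra.adjoin K {ζ}).restrictScalars ℚ :=
      Algebra.adjoin_le (by simp)
    exact this hz
  have hmem := aeval_derivative_mem_differentIdeal (𝓞 K) K L x (by rw [hx]; exact htop)
  set w := Polynomial.aeval x (Polynomial.derivative (minpoly (𝓞 K) x)) with hw
  have hint : IsIntegral K ζ := IsIntegral.of_finite K ζ
  have hwL : algebraMap (𝓞 L) L w = Polynomial.eval ζ (Polynomial.derivative ((minpoly K ζ).map (algebraMap K L))) := by
    have h1 : minpoly K ζ = (minpoly (𝓞 K) x).map (algebraMap (𝓞 K) K) := by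
      rw [← hx]
      exact minpoly.isIntegrallyClosed_eq_field_fractions K L (IsIntegralClosure.isIntegral (𝓞 K) L x)
    rw [h1, hw, Polynomial.map_map, ← IsScalarTower.algebraMap_eq, Polynomial.derivative_map, Polynomial.eval_map_algebraMap,
      ← hx, Polynomial.aeval_algebraMap_apply]
  have hsplit : ((minpoly K ζ).map (algebraMap K L)).Splits := Normal.splits inferInstance ζ
  have hmonic : ((minpoly K ζ).map (algebraMap K L)).Monic := (minpoly.monic hint).map _
  have hroot : ζ ∈ ((minpoly K ζ).map (algebraMap K L)).roots := by
    rw [Polynomial.mem_roots hmonic.ne_zero]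
    simp [Polynomial.IsRoot, Polynomial.eval_map_algebraMap]
  rw [hsplit.eval_root_derivative hmonic hroot] at hwL
  have hdeg : (minpoly K ζ).natDegree = Module.finrank K L := by
    have h1 : IntermediateField.adjoin K {ζ} = ⊤ := by
      rw [← IntermediateField.toSubalgebra_inj, IntermediateField.adjoin_simple_toSubalgebra_of_isAlgebraic hint.isAlgebraic, htop]; rfl
    rw [← IntermediateField.adjoin.finrank hint, h1, IntermediateField.finrank_top']
  have hnodup : ((minpoly K ζ).map (algebraMap K L)).roots.Nodup :=
    Polynomial.nodup_roots (Polynomial.Separable.map (f := algebraMap K L) (Algebra.IsSeparable.isSeparable K ζ))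
  have hcard : Multiset.card (((minpoly K ζ).map (algebraMap K L)).roots.erase ζ) = Module.finrank K L - 1 := by
    rw [Multiset.card_erase_of_mem hroot, ← hsplit.natDegree_eq_card_roots, Polynomial.natDegree_map, hdeg]
    rfl
  have hnorm : |Algebra.norm ℚ (algebraMap (𝓞 L) L w)| = (p : ℚ) ^ (Module.finrank K L - 1) := by
    have habs : ∀ S : Multiset L, (∀ β ∈ S, |Algebra.norm ℚ (ζ - β)| = p) →
        |Algebra.norm ℚ (S.map (fun β => ζ - β)).prod| = (p : ℚ) ^ (Multiset.card S) := by
      intro S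
      induction S using Multiset.induction_on with
      | empty => simp
      | cons a S ih =>
        intro h
        rw [Multiset.map_cons, Multiset.prod_cons, map_mul, abs_mul, h a (by simp),
          ih (fun β hβ => h β (by simp [hβ])), Multiset.card_cons, pow_succ, mul_comm]
    rw [hwL, ← hcard]
    apply habs
    intro β hβ
    rw [hnodup.mem_erase_iff] at hβ
    obtain ⟨hne, hβ⟩ := hβ
    rw [Polynomial.mem_roots hmonic.ne_zero, Polynomial.IsRoot, Polynomial.eval_map_algebraMap] at hβ
    obtain ⟨σ, rfl⟩ := minpoly.exists_algEquiv_of_root' (Algebra.IsAlgebraic.isAlgebraic ζ) hβ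
    exact norm_diff p s hp2 hζ (hσ σ hne)
  have hN : Ideal.absNorm (Ideal.span {w}) = p ^ (Module.finrank K L - 1) := by
    rw [Ideal.absNorm_span_singleton]
    rw [← Algebra.coe_norm_int] at hnorm
    have : ((Algebra.norm ℤ w).natAbs : ℚ) = (p : ℚ) ^ (Module.finrank K L - 1) := by
      rw [← hnorm, Nat.cast_natAbs]; simp
    exact_mod_cast this
  rw [← hN]
  apply Nat.le_of_dvd
  · rw [hN]; exact pow_pos hp.out.pos _
  · exact Ideal.absNorm_dvd_absNorm_of_le ((Ideal.span_singleton_le_iff_mem _).2 hmem)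


lemma numeric_base (p : ℕ) (hp : 3 ≤ p) : ((p + 1 : ℝ) / 3) ^ p ≤ (p : ℝ) ^ (p - 2) := by
  have hp0 : (0:ℝ) < p := by exact_mod_cast (by omega : 0 < p)
  have h1 : (p + 1 : ℝ) ^ p ≤ 3 * p ^ p := by
    have h2 : (1 + (p:ℝ)⁻¹) ^ p ≤ 3 := by
      calc (1 + (p:ℝ)⁻¹) ^ p ≤ (Real.exp ((p:ℝ)⁻¹)) ^ p := by
            gcongr; rw [add_comm]; exact Real.add_one_le_exp _
        _ = Real.exp 1 := by rw [← Real.exp_nat_mul]; congr 1; field_simp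
        _ ≤ 3 := by have := Real.exp_one_lt_d9; linarith
    have h3 : (p + 1 : ℝ) = (1 + (p:ℝ)⁻¹) * p := by field_simp
    rw [h3, mul_pow]
    gcongr
  have h4 : (p:ℝ)^2 ≤ 3 ^ (p - 1) := by
    have : ∀ k : ℕ, (k + 3)^2 ≤ 3 ^ (k + 2) := by
      intro k
      induction k with
      | zero => norm_num
      | succ k ih =>
        have h8 : (k + 1 + 3)^2 ≤ 3 * (k + 3)^2 := Nat.le.intro (k := 2 * k^2 + 10 * k + 11) (by ring)
        have h9 : 3 ^ (k + 1 + 2) = 3 * 3 ^ (k + 2) := by ring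
        rw [h9]
        exact h8.trans (Nat.mul_le_mul_left 3 ih)
    obtain ⟨k, rfl⟩ := Nat.exists_eq_add_of_le' hp
    exact_mod_cast this k
  have h5 : (p:ℝ)^p = p ^ (p-2) * p^2 := by rw [← pow_add]; congr 1; omega
  have h6 : (3:ℝ)^p = 3 ^ (p-1) * 3 := by rw [← pow_succ]; congr 1; omega
  rw [div_pow, div_le_iff₀ (by positivity)]
  have h7 : (0:ℝ) < p^(p-2) := by positivity
  calc (p + 1 : ℝ) ^ p ≤ 3 * p^p := h1
    _ = p ^ (p-2) * (p^2 * 3) := by rw [h5]; ring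
    _ ≤ p ^ (p-2) * (3 ^ (p-1) * 3) := by gcongr
    _ = _ := by rw [h6]

lemma numeric (p s d n D : ℕ) (hp : 3 ≤ p) (hs : 1 ≤ s) (hd : d ≤ p - 1) (hd0 : 1 ≤ d)
    (hn : n * d = p ^ s * (p - 1))
    (hD : p ^ (p ^ s * ((p - 1) * (s + 1) - 1)) ≤ p ^ (d - 1) * D ^ d) :
    (((p:ℝ) ^ s * (p + 1)) / 3) ^ n ≤ D := by
  have hp0 : (0:ℝ) < p := by exact_mod_cast (by omega : 0 < p)
  have hp1 : (1:ℝ) ≤ p := by exact_mod_cast (by omega : 1 ≤ p)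
  rw [← pow_le_pow_iff_left₀ (by positivity) (by positivity) (by omega : d ≠ 0), ← pow_mul, hn]
  have hD' : (p:ℝ) ^ (p ^ s * ((p - 1) * (s + 1) - 1)) ≤ p ^ (d - 1) * D ^ d := by exact_mod_cast hD
  refine le_of_mul_le_mul_left (le_trans ?_ hD') (pow_pos hp0 (d - 1))
  obtain ⟨k, rfl⟩ := Nat.exists_eq_add_of_le' hs
  obtain ⟨t, rfl⟩ : ∃ t, p = t + 2 := ⟨p - 2, by omega⟩
  set P : ℕ := t + 2 with hP
  have e1 : P - 1 = t + 1 := by omega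
  rw [e1] at hd ⊢
  set m := P ^ k with hm
  have hm1 : 1 ≤ m := Nat.one_le_pow _ _ (by omega)
  have hq : P ^ (k + 1) = P * m := by rw [hm, pow_succ]; ring
  have e2 : (t + 1) * (k + 1 + 1) - 1 = (k + 1) * (t + 1) + t := by
    have : (t + 1) * (k + 1 + 1) = (k + 1) * (t + 1) + t + 1 := by ring
    omega
  rw [e2]
  have hb := numeric_base P hp
  have e3 : P - 2 = t := by omega
  rw [e3] at hb
  calc (P:ℝ) ^ (d - 1) * ((P:ℝ) ^ (k+1) * (P + 1) / 3) ^ (P ^ (k+1) * (t+1))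
      = (P:ℝ) ^ (d-1) * ((P:ℝ) ^ ((k+1) * (P ^ (k+1) * (t+1))) * ((((P:ℝ) + 1) / 3) ^ P) ^ (m * (t+1))) := by
        rw [mul_div_assoc, mul_pow, ← pow_mul, ← pow_mul]
        congr 3
        rw [hq]; ring
    _ ≤ (P:ℝ) ^ (t * m) * ((P:ℝ) ^ ((k+1) * (P ^ (k+1) * (t+1))) * ((P:ℝ) ^ t) ^ (m * (t+1))) := by
        have : d - 1 ≤ t * m := le_trans (by omega : d - 1 ≤ t) (Nat.le_mul_of_pos_right t hm1)
        gcongr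
    _ = _ := by
        rw [← pow_mul, ← pow_add, ← pow_add]
        congr 1
        rw [hq, hP]; ring

lemma coords {L : Type*} [Field L] [NumberField L] (m : ℕ) [NeZero m] {ζ : L} (hζ : IsPrimitiveRoot ζ m)
    [IsCyclotomicExtension {m} ℚ L] (z : L) : ∃ x : ZMod m → ℚ, z = ∑ i, (x i : L) * ζ ^ i.val := by
  have h0 := IsCyclotomicExtension.adjoin_primitive_root_eq_top (A := ℚ) (B := L) hζ
  have hz : z ∈ Algebra.adjoin ℚ {ζ} := by rw [h0]; trivial
  rw [Algebra.adjoin_singleton_eq_range_aeval] at hz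
  obtain ⟨f, rfl⟩ := hz
  have hspan : Polynomial.aeval ζ f ∈ Submodule.span ℚ (Set.range (fun i : ZMod m => ζ ^ i.val)) := by
    rw [Polynomial.aeval_eq_sum_range]
    refine Submodule.sum_mem _ fun k _ => Submodule.smul_mem _ _ (Submodule.subset_span ⟨(k : ZMod m), ?_⟩)
    simp only [ZMod.val_natCast]
    conv_lhs => rw [hζ.eq_orderOf]
    exact pow_mod_orderOf ζ k
  obtain ⟨x, hx⟩ := (Submodule.mem_span_range_iff_exists_fun ℚ).1 hspan
  refine ⟨x, ?_⟩
  rw [AlgHom.toRingHom_eq_coe, RingHom.coe_coe, ← hx]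
  simp [Algebra.smul_def]

lemma core {K L : Type*} [Field K] [NumberField K] [Field L] [NumberField L] [Algebra K L] [IsGalois K L]
    (p q : ℕ) (hp : 1 < p) [NeZero q] [NeZero p] [NeZero (q * p)]
    {ζ : L} (hζ : IsPrimitiveRoot ζ (q * p)) [IsCyclotomicExtension {q * p} ℚ L]
    (hL : Module.finrank ℚ L = q * (p - 1)) (x : K) :
    ∃ c : NumberField.RingOfIntegers K, |((Algebra.norm ℚ (x - (c : K)) : ℚ) : ℝ)| ^ 2
      ≤ ((q * (p + 1) : ℝ) / 12) ^ Module.finrank ℚ K := by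
  classical
  set m := q * p with hm
  let a := hζ.autToPow K
  have he : ∀ (σ : L ≃ₐ[K] L) (i : ZMod m), σ (ζ ^ i.val) = ζ ^ ((a σ : ZMod m) * i).val := by
    intro σ i
    have h1 : ∀ j : ZMod m, ζ ^ j.val = AddChar.zmodChar m hζ.pow_eq_one j := fun j => (AddChar.zmodChar_apply _ _).symm
    rw [map_pow, ← hζ.autToPow_spec K σ, h1, h1, ← AddChar.map_nsmul_eq_pow]
    congr 1
    simp [a, mul_comm]
  have hre : ∀ (σ : L ≃ₐ[K] L) (f : ZMod m → ℚ), (∀ i, f ((a σ : ZMod m) * i) = f i) →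
      σ (∑ i, (f i : L) * ζ ^ i.val) = ∑ i, (f i : L) * ζ ^ i.val := by
    intro σ f hf
    rw [map_sum]
    simp_rw [map_mul, he, map_ratCast]
    rw [← Equiv.sum_comp (Units.mulLeft (a σ)) (fun i => (f i : L) * ζ ^ i.val)]
    refine Finset.sum_congr rfl fun i _ => ?_
    simp only [Units.mulLeft_apply]
    rw [hf]
  obtain ⟨x0, hx0⟩ := coords m hζ (algebraMap K L x)
  have hd0 : (Fintype.card (L ≃ₐ[K] L) : ℚ) ≠ 0 := by exact_mod_cast Fintype.card_ne_zero
  let X : ZMod m → ℚ := fun i => (Fintype.card (L ≃ₐ[K] L) : ℚ)⁻¹ * ∑ σ : L ≃ₐ[K] L, x0 ((a σ : ZMod m) * i)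
  have hXinv : ∀ (τ : L ≃ₐ[K] L) i, X ((a τ : ZMod m) * i) = X i := by
    intro τ i
    simp only [X]
    congr 1
    rw [← Equiv.sum_comp (Equiv.mulRight τ) (fun σ => x0 ((a σ : ZMod m) * i))]
    refine Finset.sum_congr rfl fun σ _ => ?_
    simp [mul_assoc]
  have hX : algebraMap K L x = ∑ i, (X i : L) * ζ ^ i.val := by
    have h1 : ∀ σ : L ≃ₐ[K] L, ∑ i, (x0 ((a σ : ZMod m) * i) : L) * ζ ^ i.val = algebraMap K L x := by
      intro σ
      apply σ.injective
      rw [σ.commutes, hx0, map_sum]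
      simp_rw [map_mul, he, map_ratCast]
      exact Equiv.sum_comp (Units.mulLeft (a σ)) (fun i => (x0 i : L) * ζ ^ i.val)
    simp only [X]
    push_cast
    simp_rw [mul_assoc, Finset.sum_mul]
    rw [← Finset.mul_sum, Finset.sum_comm, Finset.sum_congr rfl (fun σ _ => h1 σ)]
    have : (Fintype.card (L ≃ₐ[K] L) : L) ≠ 0 := by exact_mod_cast Fintype.card_ne_zero
    rw [Finset.sum_const, Finset.card_univ, nsmul_eq_mul]
    field_simp
  obtain ⟨t, ht⟩ := normBound p q hp hζ hL X
  set z : L := ∑ i, ((X i - ⌊(X i : ℝ) - t⌋ : ℚ) : L) * ζ ^ i.val with hz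
  set c' : L := ∑ i, (((⌊(X i : ℝ) - t⌋ : ℤ) : ℚ) : L) * ζ ^ i.val with hc'
  have hfix : ∀ σ : L ≃ₐ[K] L, σ c' = c' := fun σ => hre σ _ (fun i => by rw [hXinv])
  obtain ⟨k, hk⟩ := (IsGalois.mem_range_algebraMap_iff_fixed (F := K) c').2 hfix
  have hcint : IsIntegral ℤ c' := by
    refine IsIntegral.sum _ fun i _ => IsIntegral.mul ?_ ((hζ.isIntegral (NeZero.pos m)).pow _)
    rw [Rat.cast_intCast]
    exact isIntegral_algebraMap (R := ℤ) (A := L)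
  have hkint : IsIntegral ℤ k := by
    rw [← hk] at hcint
    exact (isIntegral_algebraMap_iff (algebraMap K L).injective).1 hcint
  refine ⟨⟨k, hkint⟩, ?_⟩
  have hzk : algebraMap K L (x - k) = z := by
    rw [map_sub, hX, hk, hz, hc', ← Finset.sum_sub_distrib]
    refine Finset.sum_congr rfl fun i _ => ?_
    push_cast; ring
  have hN : Algebra.norm ℚ z = (Algebra.norm ℚ (x - k)) ^ Module.finrank K L := by
    rw [← hzk, ← Algebra.norm_norm (S := K), Algebra.norm_algebraMap, map_pow]
  rw [hN, ← Module.finrank_mul_finrank ℚ K L, pow_mul, Rat.cast_pow, abs_pow, ← pow_mul, mul_comm, pow_mul] at ht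
  exact (pow_le_pow_iff_left₀ (by positivity) (by positivity) (Module.finrank_pos (R := K) (M := L)).ne').1 ht

theorem minkowski_conjecture_of_oddPrimePower_conductor
    (p r : ℕ) (hp : p.Prime) (hodd : Odd p) (hr : 1 < r)
    (K : Type*) [Field K] [NumberField K]
    (hcond : HasConductor K ⟨p ^ r, pow_pos hp.pos r⟩) :
    euclideanMinimum K ≤
      (2 : ℝ)⁻¹ ^ (Module.finrank ℚ K) * Real.sqrt |(NumberField.discr K : ℝ)| := by
  obtain ⟨s, rfl⟩ : ∃ s, r = s + 1 := ⟨r - 1, by omega⟩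
  have hs : 1 ≤ s := by omega
  have hp2 : p ≠ 2 := by rintro rfl; exact absurd hodd (by decide)
  have hp3 : 3 ≤ p := by have := hp.two_le; omega
  have : Fact p.Prime := ⟨hp⟩
  have : NeZero p := ⟨hp.ne_zero⟩
  have : NeZero (p ^ s) := ⟨(pow_pos hp.pos _).ne'⟩
  have hne : NeZero (p ^ (s + 1)) := ⟨(pow_pos hp.pos _).ne'⟩
  have hne' : NeZero (p ^ s * p) := ⟨(mul_pos (pow_pos hp.pos _) hp.pos).ne'⟩
  obtain ⟨⟨ι⟩, hmin⟩ := hcond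
  have hnot : ¬ Nonempty (K →ₐ[ℚ] CyclotomicField (p ^ s) ℚ) := by
    intro h
    have h1 := hmin ⟨p ^ s, pow_pos hp.pos s⟩ h
    have h2 : p ^ (s + 1) ≤ p ^ s := h1
    exact absurd h2 (not_le.2 (Nat.pow_lt_pow_right hp.one_lt (Nat.lt_succ_self s)))
  change K →ₐ[ℚ] CyclotomicField (p ^ (s + 1)) ℚ at ι
  set L := CyclotomicField (p ^ (s + 1)) ℚ with hLdef
  have hcyc : IsCyclotomicExtension {p ^ (s + 1)} ℚ L := CyclotomicField.isCyclotomicExtension _ ℚ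
  have hcyc' : IsCyclotomicExtension {p ^ s * p} ℚ L := by
    rw [← pow_succ p s]
    exact hcyc
  have : NumberField L := IsCyclotomicExtension.numberField {p ^ (s + 1)} ℚ L
  letI : Algebra K L := ι.toRingHom.toAlgebra
  have : IsScalarTower ℚ K L :=
    IsScalarTower.of_algebraMap_eq (fun x => (ι.commutes x).symm)
  have : IsGalois ℚ L := IsCyclotomicExtension.isGalois {p ^ (s + 1)} ℚ L
  have : IsGalois K L := IsGalois.tower_top_of_isGalois ℚ K L
  obtain ⟨ζ, hζ⟩ : ∃ ζ : L, IsPrimitiveRoot ζ (p ^ (s + 1)) :=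
    ⟨_, IsCyclotomicExtension.zeta_spec (p ^ (s + 1)) ℚ L⟩
  have hζ' : IsPrimitiveRoot ζ (p ^ s * p) := by
    rw [← pow_succ p s]
    exact hζ
  have hnd := not_dvd_gal (K := K) p s hp2 hs hζ hnot
  obtain ⟨hcard, hσ⟩ := gal_facts (K := K) p s hζ hnd
  have hdisc := disc_bound (K := K) p s hp2 hζ hσ
  rw [IsGalois.card_aut_eq_finrank] at hcard
  have hL : Module.finrank ℚ L = p ^ s * (p - 1) := by
    rw [IsCyclotomicExtension.finrank (n := p ^ (s + 1)) L
      (Polynomial.cyclotomic.irreducible_rat (pow_pos hp.pos _)), Nat.totient_prime_pow_succ hp]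
  have hn : Module.finrank ℚ K * Module.finrank K L = p ^ s * (p - 1) := by
    rw [Module.finrank_mul_finrank, hL]
  have hDL : (discr L).natAbs = p ^ (p ^ s * ((p - 1) * (s + 1) - 1)) := by
    rw [IsCyclotomicExtension.Rat.discr_prime_pow_succ p s L, Int.natAbs_mul, Int.natAbs_pow,
      Int.natAbs_pow]
    simp
  rw [hDL] at hdisc
  have hnum := numeric p s (Module.finrank K L) (Module.finrank ℚ K) (discr K).natAbs hp3 hs hcard
    Module.finrank_pos hn hdisc
  rw [Nat.cast_natAbs, Int.cast_abs] at hnum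
  have hR : 0 ≤ (2 : ℝ)⁻¹ ^ (Module.finrank ℚ K) * Real.sqrt |(NumberField.discr K : ℝ)| := by
    positivity
  unfold euclideanMinimum
  refine Real.iSup_le (fun x => ?_) hR
  obtain ⟨c, hc⟩ := core p (p ^ s) hp.one_lt hζ' hL x
  refine (ciInf_le ⟨0, ?_⟩ c).trans ?_
  · rintro _ ⟨y, rfl⟩
    exact abs_nonneg _
  refine (pow_le_pow_iff_left₀ (abs_nonneg _) hR two_ne_zero).1 (hc.trans ?_)
  rw [mul_pow, Real.sq_sqrt (abs_nonneg _), ← pow_mul, mul_comm _ 2, pow_mul]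
  refine le_trans (le_of_eq ?_) (mul_le_mul_of_nonneg_left hnum (by positivity))
  rw [← mul_pow]
  congr 1
  push_cast
  ring
end

section
/- Let p be an odd prime, r ≥ 1, and K an abelian number field of conductor p^r of degree n over ℚ. Let ζ be a primitive p^r-th root of unity, e = [ℚ(ζ):K], and υ = r·n − (p^{r−1}−1)/e − 1. Let q(x,y) = Tr_{K/ℚ}(x·ȳ) on the ring of integers O_K, where ¯ is complex conjugation (the identity if K is totally real), and let det(O_K,q) denote the determinant of the Gram matrix of q in a ℤ-basis of O_K. Then sup_{x ∈ K⊗ℝ} inf_{c ∈ O_K} q(x−c, x−c) ≤ n · p^{r − υ/n} · (p^{r+1} + p^r + 1 − e²)/(12·p^{r+1}) · det(O_K,q)^{1/n}, where q is extended ℝ-bilinearly to K⊗ℝ. -/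
open NumberField
open scoped TensorProduct

/-- The determinant of the Gram matrix of a bilinear form `B` on `K` with respect to
a ℤ-basis of the ring of integers of `K`. -/
noncomputable def gramDet (K : Type*) [Field K] [NumberField K]
    (B : K →ₗ[ℚ] K →ₗ[ℚ] ℚ) : ℚ :=
  letI := Classical.decEq (Module.Free.ChooseBasisIndex ℤ (𝓞 K))
  (Matrix.of fun i j => B (RingOfIntegers.basis K i) (RingOfIntegers.basis K j)).det

set_option linter.unusedSectionVars false

lemma cov_abel (X a : ℕ → ℝ) (m : ℕ) :
    ∑ j ∈ Finset.range (m+1), (X (j+1) - X j) * a j =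
      X (m+1) * a m - X 0 * a 0 + ∑ i ∈ Finset.range m, X (i+1) * (a i - a (i+1)) := by
  induction m with
  | zero => simp; ring
  | succ m ih => rw [Finset.sum_range_succ, ih, Finset.sum_range_succ _ m]; ring

lemma cov_sums (e : ℝ) (m : ℕ) :
    ∑ i ∈ Finset.range m, (1 + e * (2 * (i:ℝ) + 1)) = m + e * m ^ 2 ∧
    ∑ i ∈ Finset.range m, (1 + e * (2 * (i:ℝ) + 1)) ^ 2 =
      m + 2 * e * m ^ 2 + e ^ 2 * m * (4 * m ^ 2 - 1) / 3 := by
  induction m with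
  | zero => simp
  | succ m ih =>
    rw [Finset.sum_range_succ, Finset.sum_range_succ, ih.1, ih.2]
    push_cast
    constructor <;> ring

lemma cov_quad (m : ℕ) (p e : ℝ) (he : 0 ≤ e) (hp : p = e * m + 1) (x : ℕ → ℝ) :
    ∑ i ∈ Finset.range m, x i * (1 + e * (2 * i + 1 - m)) -
      (p * ∑ i ∈ Finset.range m, x i ^ 2 - e * (∑ i ∈ Finset.range m, x i) ^ 2) ≤
      m * (p ^ 2 + p + 1 - e ^ 2) / (12 * p) := by
  have hm : (0:ℝ) ≤ m := Nat.cast_nonneg m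
  have hp0 : 0 < p := by rw [hp]; positivity
  set u : ℕ → ℝ := fun i => (1 + e * (2 * (i:ℝ) + 1)) / (2 * p) with hu
  obtain ⟨s1, s2⟩ := cov_sums e m
  have hu1 : ∑ i ∈ Finset.range m, u i = m / 2 := by
    simp only [hu]
    rw [← Finset.sum_div, s1, hp]
    have : e * m + 1 ≠ 0 := by rw [← hp]; exact hp0.ne'
    field_simp
    ring
  have hu2 : ∑ i ∈ Finset.range m, u i ^ 2 =
      (m + 2 * e * m ^ 2 + e ^ 2 * m * (4 * m ^ 2 - 1) / 3) / (4 * p ^ 2) := by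
    simp only [hu, div_pow]
    rw [← Finset.sum_div, s2]; ring
  have hcs : (∑ i ∈ Finset.range m, (x i - u i)) ^ 2 ≤
      m * ∑ i ∈ Finset.range m, (x i - u i) ^ 2 := by
    simpa using sq_sum_le_card_mul_sum_sq (s := Finset.range m) (f := fun i => x i - u i)
  have hnn : 0 ≤ ∑ i ∈ Finset.range m, (x i - u i) ^ 2 := Finset.sum_nonneg fun i _ => sq_nonneg _
  have h1 : ∑ i ∈ Finset.range m, (x i - u i) ^ 2 = ∑ i ∈ Finset.range m, x i ^ 2
      - 2 * ∑ i ∈ Finset.range m, x i * u i + ∑ i ∈ Finset.range m, u i ^ 2 := by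
    rw [Finset.mul_sum, ← Finset.sum_sub_distrib, ← Finset.sum_add_distrib]
    exact Finset.sum_congr rfl fun i _ => by ring
  have h2 : ∑ i ∈ Finset.range m, (x i - u i) = ∑ i ∈ Finset.range m, x i - m / 2 := by
    rw [Finset.sum_sub_distrib, hu1]
  have h3 : ∑ i ∈ Finset.range m, x i * (1 + e * (2 * i + 1 - m)) =
      2 * p * ∑ i ∈ Finset.range m, x i * u i - e * m * ∑ i ∈ Finset.range m, x i := by
    rw [Finset.mul_sum, Finset.mul_sum, ← Finset.sum_sub_distrib]
    refine Finset.sum_congr rfl fun i _ => ?_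
    simp only [hu]; field_simp; ring
  have hpos : 0 ≤ p * ∑ i ∈ Finset.range m, (x i - u i) ^ 2 -
      e * (∑ i ∈ Finset.range m, (x i - u i)) ^ 2 := by
    have := mul_le_mul_of_nonneg_left hcs he
    nlinarith
  have key : m * (p ^ 2 + p + 1 - e ^ 2) / (12 * p) =
      p * ∑ i ∈ Finset.range m, u i ^ 2 - e * (m / 2) ^ 2 := by
    rw [hu2]
    field_simp
    rw [hp]; ring
  rw [key, h3]
  rw [h1, h2] at hpos
  nlinarith

lemma cov_sorted (m : ℕ) (p e : ℝ) (he : 0 ≤ e) (hp : p = e * m + 1) (x : ℕ → ℝ)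
    (hx : ∀ i j, i ≤ j → j < m → x i ≤ x j) (h0 : ∀ i < m, 0 ≤ x i) (h1 : ∀ i < m, x i ≤ 1) :
    ∃ c : ℕ → ℤ, p * ∑ i ∈ Finset.range m, (x i - c i) ^ 2 -
      e * (∑ i ∈ Finset.range m, (x i - c i)) ^ 2 ≤ m * (p ^ 2 + p + 1 - e ^ 2) / (12 * p) := by
  by_contra! hcon
  set M := m * (p ^ 2 + p + 1 - e ^ 2) / (12 * p) with hM
  set v : ℕ → ℕ → ℤ := fun j i => if j ≤ i then 1 else 0 with hv
  set a : ℕ → ℝ := fun j => p * ∑ i ∈ Finset.range m, (x i - v j i) ^ 2 -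
      e * (∑ i ∈ Finset.range m, (x i - v j i)) ^ 2 with ha
  set X : ℕ → ℝ := fun j => if j = 0 then 0 else if j ≤ m then x (j-1) else 1 with hX
  have hg : ∀ j ∈ Finset.range (m+1), 0 ≤ X (j+1) - X j := by
    intro j hj
    simp only [Finset.mem_range] at hj
    rcases Nat.eq_zero_or_pos j with rfl | hj0
    · simp only [hX]
      by_cases h : 1 ≤ m
      · simpa [h] using h0 0 h
      · simp [h]
    · simp only [hX, hj0.ne', if_false, Nat.succ_ne_zero, Nat.add_sub_cancel]
      rw [if_pos (by omega : j ≤ m)]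
      split_ifs with h
      · have := hx (j-1) j (by omega) (by omega); linarith
      · have := h1 (j-1) (by omega); linarith
  have hsum1 : ∑ j ∈ Finset.range (m+1), (X (j+1) - X j) = 1 := by
    rw [Finset.sum_range_sub]; simp [hX]
  have hle : M ≤ ∑ j ∈ Finset.range (m+1), (X (j+1) - X j) * a j := by
    calc M = ∑ j ∈ Finset.range (m+1), (X (j+1) - X j) * M := by
          rw [← Finset.sum_mul, hsum1, one_mul]
      _ ≤ _ := Finset.sum_le_sum fun j hj => mul_le_mul_of_nonneg_left (hcon (v j)).le (hg j hj)
  have hlt : M < ∑ j ∈ Finset.range (m+1), (X (j+1) - X j) * a j := by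
    refine lt_of_le_of_ne hle fun heq => ?_
    have hz : ∑ j ∈ Finset.range (m+1), (X (j+1) - X j) * (a j - M) = 0 := by
      have : ∀ j ∈ Finset.range (m+1), (X (j+1) - X j) * (a j - M) =
          (X (j+1) - X j) * a j - (X (j+1) - X j) * M := fun j _ => by ring
      rw [Finset.sum_congr rfl this, Finset.sum_sub_distrib, ← Finset.sum_mul _ _ M, hsum1, ← heq]
      ring
    rw [Finset.sum_eq_zero_iff_of_nonneg
      (fun j hj => mul_nonneg (hg j hj) (by have := hcon (v j); simp only [ha]; linarith))] at hz
    have : ∑ j ∈ Finset.range (m+1), (X (j+1) - X j) = 0 := Finset.sum_eq_zero fun j hj => by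
      rcases mul_eq_zero.1 (hz j hj) with h | h
      · exact h
      · have := hcon (v j); simp only [ha] at h; linarith
    linarith
  have hM2 := cov_quad m p e he hp x
  rw [cov_abel] at hlt
  have hXm : X (m+1) = 1 := by simp [hX]
  have hX0 : X 0 = 0 := by simp [hX]
  rw [hXm, hX0] at hlt
  have ham : a m = p * ∑ i ∈ Finset.range m, x i ^ 2 - e * (∑ i ∈ Finset.range m, x i) ^ 2 := by
    have : ∀ i ∈ Finset.range m, x i - (v m i : ℝ) = x i := by
      intro i hi
      have : ¬ m ≤ i := by simpa using hi
      simp [hv, this]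
    simp only [ha]
    rw [Finset.sum_congr rfl this, Finset.sum_congr rfl (fun i hi => by rw [this i hi])]
  have hV : ∀ j ≤ m, ∑ i ∈ Finset.range m, (v j i : ℝ) = m - j := by
    intro j hj
    simp only [hv, Int.cast_ite, Int.cast_one, Int.cast_zero]
    rw [← Finset.sum_filter, Finset.sum_const, nsmul_eq_mul, mul_one]
    have : (Finset.range m).filter (fun i => j ≤ i) = Finset.Ico j m := by
      ext i; simp [and_comm]
    rw [this, Nat.card_Ico, Nat.cast_sub hj]
  have hdiff : ∀ i ∈ Finset.range m, X (i+1) * (a i - a (i+1)) =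
      x i * (1 + e * (2 * i + 1 - m)) - 2 * p * x i ^ 2 +
        2 * e * (∑ i ∈ Finset.range m, x i) * x i := by
    intro i hi
    have hi' := Finset.mem_range.1 hi
    have hXi : X (i+1) = x i := by simp [hX]; omega
    have hs : ∀ j ≤ m, ∑ i ∈ Finset.range m, (x i - (v j i : ℝ)) =
        ∑ i ∈ Finset.range m, x i - (m - j) := fun j hj => by
      rw [Finset.sum_sub_distrib, hV j hj]
    have hq : ∑ l ∈ Finset.range m, (x l - (v i l : ℝ)) ^ 2 -
        ∑ l ∈ Finset.range m, (x l - (v (i+1) l : ℝ)) ^ 2 = 1 - 2 * x i := by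
      rw [← Finset.sum_sub_distrib, Finset.sum_eq_single i]
      · simp [hv]; ring
      · intro l _ hl
        have : (v i l) = v (i+1) l := by
          simp only [hv]
          by_cases h : i ≤ l
          · rw [if_pos h, if_pos (by omega)]
          · rw [if_neg h, if_neg (by omega)]
        rw [this]; ring
      · intro h; exact absurd hi h
    simp only [ha, hXi]
    rw [hs i (by omega), hs (i+1) (by omega)]
    have : p * ∑ l ∈ Finset.range m, (x l - (v i l : ℝ)) ^ 2 =
        p * (∑ l ∈ Finset.range m, (x l - (v (i+1) l : ℝ)) ^ 2 + (1 - 2 * x i)) := by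
      rw [← hq]; ring
    rw [this, hp]; push_cast; ring
  rw [Finset.sum_congr rfl hdiff, Finset.sum_add_distrib, Finset.sum_sub_distrib, ham,
    ← Finset.mul_sum, ← Finset.mul_sum] at hlt
  nlinarith

lemma cov_main {ι : Type*} (s : Finset ι) (p e : ℝ) (he : 0 ≤ e) (hp : p = e * s.card + 1)
    (x : ι → ℝ) :
    ∃ c : ι → ℤ, p * ∑ i ∈ s, (x i - c i) ^ 2 - e * (∑ i ∈ s, (x i - c i)) ^ 2 ≤
      s.card * (p ^ 2 + p + 1 - e ^ 2) / (12 * p) := by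
  classical
  set m := s.card with hm
  let E : Fin m ≃ s := s.equivFin.symm
  let y : Fin m → ℝ := fun i => Int.fract (x (E i))
  let τ := Tuple.sort y
  have hmono : Monotone (y ∘ τ) := Tuple.monotone_sort y
  let z : ℕ → ℝ := fun i => if h : i < m then y (τ ⟨i, h⟩) else 1
  obtain ⟨c, hc⟩ := cov_sorted m p e he hp z
    (by
      intro i j hij hj
      have hi : i < m := by omega
      simp only [z, hi, hj, dif_pos]
      exact hmono (by simpa using hij))
    (by intro i hi; simp only [z, hi, dif_pos]; exact Int.fract_nonneg _)
    (by intro i hi; simp only [z, hi, dif_pos]; exact (Int.fract_lt_one _).le)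
  let F : Fin m ≃ s := τ.trans E
  refine ⟨fun i => if h : i ∈ s then ⌊x i⌋ + c (F.symm ⟨i, h⟩) else 0, ?_⟩
  have tr : ∀ g : ℝ → ℝ, ∑ i ∈ s, g (x i - ((if h : i ∈ s then ⌊x i⌋ + c (F.symm ⟨i, h⟩) else 0 : ℤ) : ℝ))
      = ∑ i ∈ Finset.range m, g (z i - c i) := by
    intro g
    rw [← Finset.sum_coe_sort, Finset.sum_range, ← Equiv.sum_comp F]
    refine Finset.sum_congr rfl fun i _ => ?_
    congr 1
    have h1 : ((F i : s) : ι) ∈ s := (F i).2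
    simp only [h1, dif_pos, Subtype.coe_eta, Equiv.symm_apply_apply, z, i.2, y, Int.fract]
    push_cast
    simp only [F, Equiv.trans_apply]
    ring
  have t1 := tr (fun t => t ^ 2)
  have t2 := tr (fun t => t)
  rw [t1, t2]
  exact hc

lemma zk_card (p r : ℕ) (hp : p.Prime) (hr : 1 ≤ r) [NeZero (p ^ r)] :
    (Finset.univ.filter (fun j : ZMod (p ^ r) => (p : ZMod (p ^ r)) * j = 0)).card = p := by
  classical
  obtain ⟨s, rfl⟩ : ∃ s, r = s + 1 := ⟨r - 1, by omega⟩
  have : (Finset.univ.filter (fun j : ZMod (p ^ (s+1)) => (p : ZMod (p ^ (s+1))) * j = 0)) =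
      (Finset.range p).image (fun a => ((p ^ s * a : ℕ) : ZMod (p ^ (s+1)))) := by
    ext j
    simp only [Finset.mem_filter, Finset.mem_univ, true_and, Finset.mem_image, Finset.mem_range]
    constructor
    · intro h
      have h2 : ((p * j.val : ℕ) : ZMod (p ^ (s+1))) = 0 := by
        push_cast; rwa [ZMod.natCast_zmod_val]
      rw [ZMod.natCast_eq_zero_iff] at h2
      have h2 : p ^ s ∣ j.val := by
        obtain ⟨a, ha⟩ := h2
        refine ⟨a, Nat.eq_of_mul_eq_mul_left hp.pos ?_⟩
        rw [ha]; ring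
      obtain ⟨a, ha⟩ := h2
      refine ⟨a, ?_, by rw [← ha, ZMod.natCast_zmod_val]⟩
      have := ZMod.val_lt j
      rw [ha, pow_succ] at this
      exact lt_of_mul_lt_mul_left this (Nat.zero_le _)
    · rintro ⟨a, -, rfl⟩
      rw [← Nat.cast_mul, ZMod.natCast_eq_zero_iff]
      exact ⟨a, by ring⟩
  rw [this, Finset.card_image_of_injOn, Finset.card_range]
  intro a ha b hb hab
  simp only [Finset.coe_range, Set.mem_Iio] at ha hb
  have hps : 0 < p ^ s := pow_pos hp.pos s
  have hlt : ∀ c < p, p ^ s * c < p ^ (s+1) := fun c hc => by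
    rw [pow_succ]; exact Nat.mul_lt_mul_of_pos_left hc hps
  simp only at hab
  rw [ZMod.natCast_eq_natCast_iff'] at hab
  rw [Nat.mod_eq_of_lt (hlt a ha), Nat.mod_eq_of_lt (hlt b hb)] at hab
  exact Nat.eq_of_mul_eq_mul_left hps hab

lemma zk_fiber (p r : ℕ) (hp : p.Prime) (hr : 1 ≤ r) [NeZero (p ^ r)] (i : ZMod (p ^ r)) :
    (Finset.univ.filter (fun j : ZMod (p ^ r) =>
      (p : ZMod (p ^ r)) * j = (p : ZMod (p ^ r)) * i)).card = p := by
  refine Eq.trans ?_ (zk_card p r hp hr)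
  refine Finset.card_bij' (fun j _ => j - i) (fun j _ => j + i) ?_ ?_ ?_ ?_ <;>
    simp +contextual [mul_sub, mul_add]

lemma exists_reps {G Γ : Type*} [CommRing G] [Group Γ] (χ : Γ →* Gˣ) :
    ∃ rep : G → G, (∀ i, ∃ g, rep i = χ g * i) ∧ (∀ g i, rep (χ g * i) = rep i) := by
  let st : Setoid G :=
    { r := fun i j => ∃ g, j = χ g * i
      iseqv := ⟨fun i => ⟨1, by simp⟩, by
        rintro i j ⟨g, rfl⟩
        exact ⟨g⁻¹, by simp⟩, by
        rintro i j k ⟨g, rfl⟩ ⟨g', rfl⟩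
        exact ⟨g' * g, by simp [mul_assoc]⟩⟩ }
  refine ⟨fun i => (Quotient.mk st i).out, fun i => ?_, fun g i => ?_⟩
  · exact st.symm (Quotient.mk_out i)
  · have : Quotient.mk st (χ g * i) = Quotient.mk st i := Quotient.sound (st.symm ⟨g, rfl⟩)
    simp only [this]

lemma exists_S (p r : ℕ) (hp : p.Prime) (hr : 1 ≤ r) [NeZero (p ^ r)] (M : Type*)
    [AddCommGroup M] {Γ : Type*} [Group Γ]
    [Fintype Γ] (χ : Γ →* (ZMod (p ^ r))ˣ)
    (hfree : ∀ g, g ≠ 1 → IsUnit ((χ g : ZMod (p ^ r)) - 1)) :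
    ∃ S : Finset (ZMod (p ^ r)),
      (∀ s ∈ S, ∀ s' ∈ S, ∀ g, s = χ g * s' → g = 1) ∧
      (∀ s ∈ S, ∀ s' ∈ S, ∀ g, (p : ZMod (p ^ r)) * s = χ g * (p * s') →
        (p : ZMod (p ^ r)) * s = p * s' ∧ ((p : ZMod (p ^ r)) * s = 0 ∨ g = 1)) ∧
      ((S.filter (fun s => (p : ZMod (p ^ r)) * s = 0)).card * Fintype.card Γ = p - 1) ∧
      (∀ s ∈ S, (p : ZMod (p ^ r)) * s ≠ 0 →
        (S.filter (fun s' => (p : ZMod (p ^ r)) * s' = p * s)).card = p - 1) ∧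
      (∀ (t : ZMod (p ^ r) → M), (∀ g i, t (χ g * i) = t i) →
        (∀ i, ∑ j with (p : ZMod (p ^ r)) * j = p * i, t j = 0) →
        ∀ i, t i ∈ Submodule.span ℤ (t '' (S : Set (ZMod (p ^ r))))) := by
  classical
  obtain ⟨rep, hrep1, hrep2⟩ := exists_reps χ
  set P : ZMod (p ^ r) := (p : ZMod (p ^ r)) with hP
  have hfree' : ∀ g (i : ZMod (p ^ r)), i ≠ 0 → χ g * i = i → g = 1 := by
    intro g i hi h
    by_contra hg
    have : ((χ g : ZMod (p ^ r)) - 1) * i = 0 := by rw [sub_mul, h]; ring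
    exact hi ((hfree g hg).mul_right_eq_zero.1 this)
  have hex : ∀ c : ZMod (p ^ r), ∃ i, (∀ j, P * j = c → P * i = c) ∧ (c = 0 → i = 0) := by
    intro c
    by_cases hc : c = 0
    · exact ⟨0, by simp [hc], fun _ => rfl⟩
    · by_cases h : ∃ j, P * j = c
      · obtain ⟨j, hj⟩ := h
        exact ⟨j, fun _ _ => hj, fun h => absurd h hc⟩
      · push Not at h
        exact ⟨0, fun j hj => absurd hj (h j), fun _ => rfl⟩
  choose ℓ hℓ1 hℓ0 using hex
  have mem : ∀ s, s ∈ Finset.univ.filter (fun i : ZMod (p ^ r) =>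
    rep (P * i) = P * i ∧ i ≠ ℓ (P * i) ∧ (P * i = 0 → rep i = i)) ↔
    (rep (P * s) = P * s ∧ s ≠ ℓ (P * s) ∧ (P * s = 0 → rep s = s)) := by simp
  have hrep0 : rep 0 = 0 := by
    obtain ⟨g, hg⟩ := hrep1 0
    simpa using hg
  set S := Finset.univ.filter (fun i : ZMod (p ^ r) =>
    rep (P * i) = P * i ∧ i ≠ ℓ (P * i) ∧ (P * i = 0 → rep i = i)) with hS
  have h2 : ∀ s ∈ S, ∀ s' ∈ S, ∀ g, P * s = χ g * (P * s') →
        P * s = P * s' ∧ (P * s = 0 ∨ g = 1) := by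
    intro s hs s' hs' g h
    rw [mem] at hs hs'
    have e1 : P * s = P * s' := by
      rw [← hs.1, h, hrep2, hs'.1]
    refine ⟨e1, ?_⟩
    by_cases h0 : P * s = 0
    · exact Or.inl h0
    · right
      rw [← e1] at h
      exact hfree' g _ h0 h.symm
  have hne : ∀ s ∈ S, s ≠ 0 := by
    rintro s hs rfl
    rw [mem] at hs
    apply hs.2.1
    rw [mul_zero, hℓ0 0 rfl]
  have hker : ∀ s, P * s = 0 → (s ∈ S ↔ s ≠ 0 ∧ rep s = s) := by
    intro s h
    rw [mem, h, hℓ0 0 rfl, hrep0]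
    simp
  have hnk : ∀ s, P * s ≠ 0 → (s ∈ S ↔ rep (P * s) = P * s ∧ s ≠ ℓ (P * s)) := by
    intro s h
    rw [mem]
    simp [h]
  refine ⟨S, ?_, h2, ?_, ?_, ?_⟩
  · intro s hs s' hs' g h
    obtain ⟨e1, e2⟩ := h2 s hs s' hs' g (by rw [h]; ring)
    rcases e2 with e2 | e2
    · have r1 := ((hker s e2).1 hs).2
      have r2 := ((hker s' (e1 ▸ e2)).1 hs').2
      have : s = s' := by rw [← r1, h, hrep2, r2]
      rw [← this] at h
      exact hfree' g s (hne s hs) h.symm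
    · exact e2
  · have hc : (Finset.univ.filter (fun j : ZMod (p ^ r) => P * j = 0 ∧ j ≠ 0)).card = p - 1 := by
      have : (Finset.univ.filter (fun j : ZMod (p ^ r) => P * j = 0 ∧ j ≠ 0)) =
        (Finset.univ.filter (fun j : ZMod (p ^ r) => P * j = 0)).erase 0 := by
        ext j; simp [and_comm]
      rw [this, Finset.card_erase_of_mem (by simp), zk_card p r hp hr]
    rw [← hc, ← Finset.card_univ, ← Finset.card_product]
    refine Finset.card_bij (fun x _ => χ x.2 * x.1) ?_ ?_ ?_
    · rintro ⟨s, g⟩ hx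
      simp only [Finset.mem_product, Finset.mem_filter, Finset.mem_univ, and_true, true_and] at hx ⊢
      refine ⟨by rw [mul_left_comm, hx.2, mul_zero], ?_⟩
      have := hne s hx.1
      simpa using this
    · rintro ⟨s, g⟩ hx ⟨s', g'⟩ hx' h
      simp only [Finset.mem_product, Finset.mem_filter, Finset.mem_univ, and_true] at hx hx' h
      have r1 := ((hker s hx.2).1 hx.1).2
      have r2 := ((hker s' hx'.2).1 hx'.1).2
      have hss : s = s' := by
        rw [← r1, ← hrep2 g, h, hrep2, r2]
      subst hss
      have : χ (g'⁻¹ * g) * s = s := by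
        rw [map_mul, Units.val_mul, mul_assoc, h, map_inv, Units.inv_mul_cancel_left]
      have := hfree' _ s (hne s hx.1) this
      rw [inv_mul_eq_one] at this
      rw [this]
    · intro j hj
      simp only [Finset.mem_filter, Finset.mem_univ, true_and] at hj
      obtain ⟨g, hg⟩ := hrep1 j
      have k0 : P * rep j = 0 := by rw [hg, mul_left_comm, hj.1, mul_zero]
      refine ⟨(rep j, g⁻¹), ?_, ?_⟩
      · simp only [Finset.mem_product, Finset.mem_filter, Finset.mem_univ, and_true]
        refine ⟨(hker _ k0).2 ⟨?_, ?_⟩, k0⟩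
        · rw [hg]; simpa using hj.2
        · conv_lhs => rw [hg]
          rw [hrep2]
      · simp only
        rw [hg, map_inv, Units.inv_mul_cancel_left]
  · intro s hs h0
    have hs' := (hnk s h0).1 hs
    have : S.filter (fun s' => P * s' = P * s) =
        (Finset.univ.filter (fun j : ZMod (p ^ r) => P * j = P * s)).erase (ℓ (P * s)) := by
      ext j
      simp only [Finset.mem_filter, Finset.mem_erase, Finset.mem_univ, true_and]
      constructor
      · rintro ⟨hj, h⟩
        rw [hnk j (h ▸ h0), h] at hj
        exact ⟨hj.2, h⟩
      · rintro ⟨hj, h⟩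
        refine ⟨(hnk j (h ▸ h0)).2 ?_, h⟩
        rw [h]; exact ⟨hs'.1, hj⟩
    rw [this, Finset.card_erase_of_mem, zk_fiber p r hp hr]
    simp only [Finset.mem_filter, Finset.mem_univ, true_and]
    exact hℓ1 _ s rfl
  · intro t ht1 ht2
    -- if all the others of the fibre are in the span then so is any
    have hrest : ∀ i, (∀ j, P * j = P * i → j ≠ i → t j ∈ Submodule.span ℤ (t '' S)) →
        t i ∈ Submodule.span ℤ (t '' (S : Set (ZMod (p ^ r)))) := by
      intro i hi
      have h := ht2 i
      rw [← Finset.add_sum_erase _ _ (show i ∈ Finset.univ.filter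
        (fun j : ZMod (p ^ r) => P * j = P * i) by simp)] at h
      rw [eq_neg_of_add_eq_zero_left h]
      refine Submodule.neg_mem _ (Submodule.sum_mem _ fun j hj => ?_)
      simp only [Finset.mem_erase, Finset.mem_filter, Finset.mem_univ, true_and] at hj
      exact hi j hj.2 hj.1
    have hin : ∀ s ∈ S, t s ∈ Submodule.span ℤ (t '' (S : Set (ZMod (p ^ r)))) := fun s hs =>
      Submodule.subset_span ⟨s, hs, rfl⟩
    have hk : ∀ i, P * i = 0 → i ≠ 0 → t i ∈ Submodule.span ℤ (t '' (S : Set (ZMod (p ^ r)))) := by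
      intro i h0 hi
      obtain ⟨g, hg⟩ := hrep1 i
      have k0 : P * rep i = 0 := by rw [hg, mul_left_comm, h0, mul_zero]
      have : t (rep i) = t i := by rw [hg, ht1]
      rw [← this]
      apply hin
      refine (hker _ k0).2 ⟨?_, ?_⟩
      · rw [hg]; simpa using hi
      · conv_lhs => rw [hg]
        rw [hrep2]
    have hnn : ∀ i, P * i ≠ 0 → rep (P * i) = P * i →
        t i ∈ Submodule.span ℤ (t '' (S : Set (ZMod (p ^ r)))) := by
      intro i h0 hi
      by_cases hl : i = ℓ (P * i)
      · apply hrest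
        intro j hj hji
        apply hin
        rw [hnk j (hj ▸ h0), hj]
        exact ⟨hi, hl ▸ hji⟩
      · exact hin i ((hnk i h0).2 ⟨hi, hl⟩)
    intro i
    by_cases h0 : P * i = 0
    · by_cases hi : i = 0
      · apply hrest
        intro j hj hji
        exact hk j (by rw [hj, h0]) (by rwa [hi] at hji)
      · exact hk i h0 hi
    · obtain ⟨g, hg⟩ := hrep1 (P * i)
      rw [← ht1 g i]
      have e1 : P * (χ g * i) = rep (P * i) := by rw [hg]; ring
      apply hnn
      · rw [e1, hg]; simpa using h0
      · rw [e1]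
        conv_lhs => rw [hg]
        rw [hrep2]

lemma zk_dvd_iff (p r : ℕ) (hp : p.Prime) (hr : 1 ≤ r) [NeZero (p ^ r)] (x : ZMod (p ^ r)) :
    ¬ IsUnit x ↔ ∃ y, x = (p : ZMod (p ^ r)) * y := by
  constructor
  · intro h
    rw [← ZMod.natCast_zmod_val x, ZMod.isUnit_iff_coprime,
      Nat.coprime_pow_right_iff (by omega), Nat.coprime_comm, hp.coprime_iff_not_dvd, not_not] at h
    obtain ⟨y, hy⟩ := h
    exact ⟨(y : ZMod (p ^ r)), by rw [← ZMod.natCast_zmod_val x, hy]; push_cast; rfl⟩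
  · rintro ⟨y, rfl⟩ h
    have h2 := isUnit_of_mul_isUnit_left h
    rw [ZMod.isUnit_iff_coprime, Nat.coprime_pow_right_iff (by omega), Nat.coprime_self] at h2
    exact hp.one_lt.ne' h2

section arith

variable (p r : ℕ) (hp : p.Prime) (hr : 1 ≤ r) [NeZero (p ^ r)]
  {L : Type*} [Field L] [NumberField L] [IsCyclotomicExtension {p ^ r} ℚ L]
  {ζ : L} (hζ : IsPrimitiveRoot ζ (p ^ r))

/-- The additive character `i ↦ ζ ^ i`. -/
noncomputable def zpsi : AddChar (ZMod (p ^ r)) L := AddChar.zmodChar (p ^ r) hζ.pow_eq_one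

lemma zpsi_nat (a : ℕ) : zpsi p r hζ (a : ZMod (p ^ r)) = ζ ^ a :=
  AddChar.zmodChar_apply' _ a

lemma zpsi_prim : (zpsi p r hζ).IsPrimitive :=
  AddChar.zmodChar_primitive_of_primitive_root _ hζ

lemma zpsi_eq_one {i : ZMod (p ^ r)} (h : zpsi p r hζ i = 1) : i = 0 := by
  rw [← ZMod.natCast_zmod_val i, zpsi_nat, hζ.pow_eq_one_iff_dvd] at h
  rw [← ZMod.natCast_zmod_val i, ZMod.natCast_eq_zero_iff]
  exact h

lemma zpsi_gal (g : L ≃ₐ[ℚ] L) (i : ZMod (p ^ r)) :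
    g (zpsi p r hζ i) = zpsi p r hζ ((hζ.autToPow ℚ g : ZMod (p ^ r)) * i) := by
  have h1 : zpsi p r hζ i = ζ ^ i.val := by
    conv_lhs => rw [← ZMod.natCast_zmod_val i, zpsi_nat]
  have h2 : (hζ.autToPow ℚ g : ZMod (p ^ r)) * i =
      (((hζ.autToPow ℚ g : ZMod (p ^ r)).val * i.val : ℕ) : ZMod (p ^ r)) := by
    push_cast; simp only [ZMod.natCast_zmod_val]
  rw [h1, h2, zpsi_nat, map_pow, ← hζ.autToPow_spec ℚ g, pow_mul]

lemma zpsi_sum (b : ZMod (p ^ r)) :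
    ∑ x, zpsi p r hζ (x * b) = if b = 0 then (p : L) ^ r else 0 := by
  classical
  rw [AddChar.sum_mulShift b (zpsi_prim p r hζ)]
  simp [ZMod.card]

include hp hr in
lemma zpsi_fiber (i : ZMod (p ^ r)) :
    ∑ j with (p : ZMod (p ^ r)) * j = p * i, zpsi p r hζ j = 0 := by
  set j0 : ZMod (p ^ r) := ((p ^ (r - 1) : ℕ) : ZMod (p ^ r)) with hj0
  have hpj : (p : ZMod (p ^ r)) * j0 = 0 := by
    rw [hj0, ← Nat.cast_mul, ZMod.natCast_eq_zero_iff, ← pow_succ', Nat.sub_add_cancel hr]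
  have hj : j0 ≠ 0 := by
    rw [hj0, Ne, ZMod.natCast_eq_zero_iff]
    exact Nat.not_dvd_of_pos_of_lt (pow_pos hp.pos _) (Nat.pow_lt_pow_right hp.one_lt (by omega))
  have h1 : ∑ j with (p : ZMod (p ^ r)) * j = p * i, zpsi p r hζ j =
      zpsi p r hζ j0 * ∑ j with (p : ZMod (p ^ r)) * j = p * i, zpsi p r hζ j := by
    rw [Finset.mul_sum]
    refine Finset.sum_bij' (fun j _ => j - j0) (fun j _ => j + j0) ?_ ?_ ?_ ?_ ?_
    · intro j hj; simpa [mul_sub, hpj] using hj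
    · intro j hj; simpa [mul_add, hpj] using hj
    · intro j _; simp
    · intro j _; simp
    · intro j _; rw [← AddChar.map_add_eq_mul]; congr 1; ring
  by_contra hne
  exact hj (zpsi_eq_one p r hζ ((mul_eq_right₀ hne).1 h1.symm))

include hp hr in
lemma zpsi_trace (i : ZMod (p ^ r)) :
    Algebra.trace ℚ L (zpsi p r hζ i) = (if i = 0 then (p : ℚ) ^ r else 0) -
      (if (p : ZMod (p ^ r)) * i = 0 then (p : ℚ) ^ (r - 1) else 0) := by
  classical
  have : IsGalois ℚ L := IsCyclotomicExtension.isGalois {p ^ r} ℚ L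
  apply (algebraMap ℚ L).injective
  rw [trace_eq_sum_automorphisms]
  simp only [zpsi_gal]
  have hbij : Function.Bijective (hζ.autToPow ℚ) := by
    have h1 := hζ.autToPow_injective (K := ℚ)
    refine (Fintype.bijective_iff_injective_and_card _).2 ⟨h1, ?_⟩
    exact Fintype.card_congr (IsCyclotomicExtension.Rat.galEquivZMod (p ^ r) L).toEquiv
  rw [hbij.sum_comp (fun u : (ZMod (p ^ r))ˣ => zpsi p r hζ ((u : ZMod (p ^ r)) * i))]
  have h1 : ∑ u : (ZMod (p ^ r))ˣ, zpsi p r hζ ((u : ZMod (p ^ r)) * i) =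
      ∑ x with IsUnit x, zpsi p r hζ (x * i) := by
    refine Finset.sum_bij (fun u _ => (u : ZMod (p ^ r))) ?_ ?_ ?_ ?_
    · intro u _; simp
    · intro u _ v _ h; exact Units.ext h
    · intro x hx
      obtain ⟨u, rfl⟩ := (Finset.mem_filter.1 hx).2
      exact ⟨u, Finset.mem_univ _, rfl⟩
    · intro u _; rfl
  have h2 := Finset.sum_filter_add_sum_filter_not Finset.univ
    (fun x : ZMod (p ^ r) => IsUnit x) (fun x => zpsi p r hζ (x * i))
  rw [zpsi_sum] at h2
  have h3 : (p : L) * ∑ x with ¬ IsUnit x, zpsi p r hζ (x * i) =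
      if (p : ZMod (p ^ r)) * i = 0 then (p : L) ^ r else 0 := by
    rw [← zpsi_sum p r hζ]
    have e1 : ∀ x : ZMod (p ^ r), zpsi p r hζ (x * (p * i)) = zpsi p r hζ ((p * x) * i) := by
      intro x; congr 1; ring
    simp only [e1]
    rw [← Finset.sum_fiberwise_of_maps_to (s := Finset.univ)
      (t := Finset.univ.filter (fun x : ZMod (p ^ r) => ¬ IsUnit x))
      (g := fun x => (p : ZMod (p ^ r)) * x)
      (fun x _ => by simpa using (zk_dvd_iff p r hp hr _).2 ⟨x, rfl⟩), Finset.mul_sum]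
    refine Finset.sum_congr rfl fun y hy => ?_
    obtain ⟨z, rfl⟩ := (zk_dvd_iff p r hp hr y).1 (Finset.mem_filter.1 hy).2
    rw [Finset.sum_congr rfl (g := fun _ => zpsi p r hζ ((p * z) * i))]
    · rw [Finset.sum_const, zk_fiber p r hp hr, nsmul_eq_mul]
    · intro x hx
      rw [(Finset.mem_filter.1 hx).2]
  have hp0 : (p : L) ≠ 0 := by exact_mod_cast hp.ne_zero
  rw [h1]
  have h4 : ∑ x with ¬ IsUnit x, zpsi p r hζ (x * i) =
      if (p : ZMod (p ^ r)) * i = 0 then (p : L) ^ (r - 1) else 0 := by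
    apply mul_left_cancel₀ hp0
    rw [h3]
    split_ifs
    · rw [← pow_succ', Nat.sub_add_cancel hr]
    · simp
  rw [h4] at h2
  rw [map_sub, eq_sub_iff_add_eq]
  convert h2 using 2
  · simp only [apply_ite (algebraMap ℚ L), map_pow, map_natCast, map_zero]
  · simp only [apply_ite (algebraMap ℚ L), map_pow, map_natCast, map_zero]

variable {K : Type*} [Field K] [NumberField K] [Algebra K L]

/-- The Galois character of `Gal(L/K)`. -/
noncomputable def zchi : (L ≃ₐ[K] L) →* (ZMod (p ^ r))ˣ :=
  (hζ.autToPow ℚ).comp (AlgEquiv.restrictScalarsHom ℚ)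

lemma zchi_inj : Function.Injective (zchi p r hζ (K := K)) := by
  intro g g' h
  exact AlgEquiv.restrictScalars_injective ℚ (hζ.autToPow_injective (K := ℚ) h)

lemma zchi_gal (g : L ≃ₐ[K] L) (i : ZMod (p ^ r)) :
    g (zpsi p r hζ i) = zpsi p r hζ ((zchi p r hζ g : ZMod (p ^ r)) * i) :=
  zpsi_gal p r hζ (g.restrictScalars ℚ) i

include hp hr in
lemma zchi_free (hcop : Nat.Coprime p (Nat.card (L ≃ₐ[K] L))) (g : L ≃ₐ[K] L) (hg : g ≠ 1) :
    IsUnit ((zchi p r hζ g : ZMod (p ^ r)) - 1) := by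
  by_contra h
  obtain ⟨y, hy⟩ := (zk_dvd_iff p r hp hr _).1 h
  have h1 : (p : ZMod (p ^ r)) ∣ (zchi p r hζ g : ZMod (p ^ r)) - 1 := ⟨y, hy⟩
  have h2 := dvd_sub_pow_of_dvd_sub h1 (r - 1)
  have h3 : ((p : ZMod (p ^ r)) ^ (r - 1 + 1)) = 0 := by
    rw [Nat.sub_add_cancel hr, ← Nat.cast_pow, ZMod.natCast_self]
  rw [h3, zero_dvd_iff, one_pow, sub_eq_zero] at h2
  have h4 : g ^ (p ^ (r - 1)) = 1 := by
    apply zchi_inj p r hζ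
    rw [map_pow, map_one]
    ext
    simpa using h2
  have h5 : g ^ Nat.card (L ≃ₐ[K] L) = 1 := pow_card_eq_one'
  apply hg
  rw [← orderOf_eq_one_iff]
  exact Nat.eq_one_of_dvd_coprimes (hcop.pow_left (r - 1)) (orderOf_dvd_of_pow_eq_one h4)
    (orderOf_dvd_of_pow_eq_one h5)

/-- The Gauss periods. -/
noncomputable def ztr (i : ZMod (p ^ r)) : K := Algebra.trace K L (zpsi p r hζ i)

variable [IsGalois K L]

lemma ztr_map (i : ZMod (p ^ r)) :
    algebraMap K L (ztr p r hζ i) =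
      ∑ g : L ≃ₐ[K] L, zpsi p r hζ ((zchi p r hζ g : ZMod (p ^ r)) * i) := by
  have : FiniteDimensional K L := Module.Finite.of_restrictScalars_finite ℚ K L
  rw [ztr, trace_eq_sum_automorphisms]
  simp only [zchi_gal]

lemma ztr_chi (g : L ≃ₐ[K] L) (i : ZMod (p ^ r)) :
    ztr p r hζ (K := K) ((zchi p r hζ g : ZMod (p ^ r)) * i) = ztr p r hζ i := by
  rw [ztr, ← zchi_gal, ztr, Algebra.trace_eq_of_algEquiv]

include hp hr in
lemma ztr_fiber (i : ZMod (p ^ r)) :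
    ∑ j with (p : ZMod (p ^ r)) * j = p * i, ztr p r hζ (K := K) j = 0 := by
  simp only [ztr]
  rw [← map_sum, zpsi_fiber p r hp hr, map_zero]

lemma zpsi_integral (i : ZMod (p ^ r)) : IsIntegral ℤ (zpsi p r hζ i) := by
  rw [← ZMod.natCast_zmod_val i, zpsi_nat]
  exact (hζ.isIntegral (NeZero.pos _)).pow _

lemma ztr_integral (i : ZMod (p ^ r)) : IsIntegral ℤ (ztr p r hζ (K := K) i) := by
  have : FiniteDimensional K L := Module.Finite.of_restrictScalars_finite ℚ K L
  exact Algebra.isIntegral_trace (zpsi_integral p r hζ i)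

lemma ztr_conj (σ : K ≃ₐ[ℚ] K)
    (hσ : ∀ φ : K →+* ℂ, ∀ x : K, φ (σ x) = starRingEnd ℂ (φ x)) (i : ZMod (p ^ r)) :
    σ (ztr p r hζ (K := K) i) = ztr p r hζ (-i) := by
  obtain ⟨τ⟩ : Nonempty (L →+* ℂ) := inferInstance
  apply (τ.comp (algebraMap K L)).injective
  rw [hσ]
  simp only [RingHom.comp_apply, ztr_map, map_sum]
  refine Finset.sum_congr rfl fun g _ => ?_
  set j := (zchi p r hζ g : ZMod (p ^ r)) * i with hj
  rw [mul_neg, ← hj]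
  have h1 : (τ (zpsi p r hζ j)) ^ (p ^ r) = 1 := by
    rw [← map_pow, ← AddChar.map_nsmul_eq_pow, nsmul_eq_mul, ZMod.natCast_self, zero_mul,
      AddChar.map_zero_eq_one, map_one]
  have h2 : ‖τ (zpsi p r hζ j)‖ = 1 := Complex.norm_eq_one_of_pow_eq_one h1 (NeZero.ne _)
  rw [AddChar.map_neg_eq_inv, map_inv₀, Complex.inv_def, Complex.normSq_eq_norm_sq, h2]
  simp

include hp hr in
lemma ztr_gram (σ : K ≃ₐ[ℚ] K)
    (hσ : ∀ φ : K →+* ℂ, ∀ x : K, φ (σ x) = starRingEnd ℂ (φ x)) (i j : ZMod (p ^ r)) :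
    Algebra.trace ℚ K (ztr p r hζ i * σ (ztr p r hζ j)) =
      ∑ g : L ≃ₐ[K] L, ((if i = (zchi p r hζ g : ZMod (p ^ r)) * j then (p : ℚ) ^ r else 0) -
        (if (p : ZMod (p ^ r)) * i = (zchi p r hζ g : ZMod (p ^ r)) * (p * j)
          then (p : ℚ) ^ (r - 1) else 0)) := by
  have : FiniteDimensional K L := Module.Finite.of_restrictScalars_finite ℚ K L
  rw [ztr_conj p r hζ σ hσ, mul_comm, ← smul_eq_mul]
  conv_lhs => enter [2, 2]; rw [ztr]
  rw [← map_smul, Algebra.trace_trace, Algebra.smul_def, ztr_map, Finset.sum_mul, map_sum]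
  refine Finset.sum_congr rfl fun g _ => ?_
  rw [← AddChar.map_add_eq_mul, zpsi_trace p r hp hr]
  congr 1
  · congr 1
    rw [mul_neg, neg_add_eq_sub, sub_eq_zero]
  · congr 1
    rw [mul_neg, neg_add_eq_sub, mul_sub, sub_eq_zero, mul_left_comm]

include hp in
lemma ztr_span (x : K) (hx : IsIntegral ℤ x) :
    (Module.finrank K L) • x ∈ Submodule.span ℤ (Set.range (ztr p r hζ (K := K))) := by
  have : Fact p.Prime := ⟨hp⟩
  rw [← Algebra.trace_algebraMap (S := L)]
  have hy : IsIntegral ℤ (algebraMap K L x) := hx.algebraMap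
  obtain ⟨y, hy⟩ :=
    (IsCyclotomicExtension.Rat.isIntegralClosure_adjoin_singleton_of_prime_pow hζ).isIntegral_iff.1 hy
  rw [← hy]
  have hmem : (y : L) ∈ Submodule.span ℤ (Set.range (zpsi p r hζ)) := by
    have h := y.2
    obtain ⟨P, hP⟩ := (Algebra.adjoin_singleton_eq_range_aeval ℤ ζ).le h
    rw [← hP]
    simp only [AlgHom.toRingHom_eq_coe, RingHom.coe_coe, Polynomial.aeval_eq_sum_range]
    refine Submodule.sum_mem _ fun a _ => Submodule.smul_mem _ _ (Submodule.subset_span ?_)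
    exact ⟨(a : ZMod (p ^ r)), zpsi_nat p r hζ a⟩
  have := Submodule.mem_map_of_mem (f := (Algebra.trace K L).restrictScalars ℤ) hmem
  rw [Submodule.map_span, ← Set.range_comp] at this
  exact this

end arith

section linalg

variable {K : Type*} [Field K] [NumberField K] (q : K →ₗ[ℚ] K →ₗ[ℚ] ℚ)
  {ι α : Type*} [Fintype ι] [DecidableEq ι] [Fintype α] [DecidableEq α]
  (cl : ι → α) (w : α → ℕ) (t : ι → K) (p r : ℕ) (hp : p.Prime) (hr : 1 ≤ r)
  (hG : ∀ s s', q (t s) (t s') = (if s = s' then (p : ℚ) ^ r else 0) -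
    (if cl s = cl s' then (w (cl s) : ℚ) * (p : ℚ) ^ (r - 1) else 0))
  (hw : ∀ a, w a * (Finset.univ.filter (fun s => cl s = a)).card = p - 1)

include hp hr hG hw in
lemma la_dual (c : ι → ℚ) (s : ι) :
    (p : ℚ) ^ r * c s = q (∑ i, c i • t i) (t s) +
      w (cl s) * ∑ s' with cl s' = cl s, q (∑ i, c i • t i) (t s') := by
  have h1 : ∀ s, q (∑ i, c i • t i) (t s) = (p : ℚ) ^ r * c s -
      w (cl s) * (p : ℚ) ^ (r - 1) * ∑ i with cl i = cl s, c i := by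
    intro s
    rw [map_sum, LinearMap.sum_apply]
    simp only [map_smul, LinearMap.smul_apply, hG, smul_eq_mul, mul_sub, Finset.sum_sub_distrib]
    congr 1
    · simp [mul_comm]
    · rw [Finset.mul_sum, Finset.sum_filter]
      refine Finset.sum_congr rfl fun i _ => ?_
      split_ifs with h
      · rw [h]; ring
      · simp
  have h2 : ∑ s' with cl s' = cl s, q (∑ i, c i • t i) (t s') =
      ∑ s' with cl s' = cl s, ((p : ℚ) ^ r * c s' -
      w (cl s) * (p : ℚ) ^ (r - 1) * ∑ i with cl i = cl s, c i) := by
    refine Finset.sum_congr rfl fun s' hs' => ?_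
    rw [h1, (Finset.mem_filter.1 hs').2]
  rw [h2, h1, Finset.sum_sub_distrib, Finset.sum_const, nsmul_eq_mul, ← Finset.mul_sum]
  have h3 : (w (cl s) : ℚ) * ((Finset.univ.filter (fun s' => cl s' = cl s)).card : ℚ) = p - 1 := by
    have := hw (cl s)
    rw [← Nat.cast_mul, this, Nat.cast_sub hp.one_le, Nat.cast_one]
  have h4 : (p : ℚ) ^ r = p * (p : ℚ) ^ (r - 1) := by
    rw [← pow_succ', Nat.sub_add_cancel hr]
  rw [h4]
  linear_combination (w (cl s) : ℚ) * (p : ℚ) ^ (r - 1) * (∑ i with cl i = cl s, c i) * h3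

include hp hr hG hw in
lemma la_li : LinearIndependent ℚ t := by
  rw [Fintype.linearIndependent_iff]
  intro c hc s
  have := la_dual q cl w t p r hp hr hG hw c s
  rw [hc] at this
  simp only [map_zero, LinearMap.zero_apply, Finset.sum_const_zero, mul_zero, add_zero] at this
  have hp0 : (p : ℚ) ^ r ≠ 0 := pow_ne_zero _ (by exact_mod_cast hp.ne_zero)
  exact (mul_eq_zero.1 this).resolve_left hp0

include hp hr hG hw in
lemma la_basis (e : ℕ) (he : e ≠ 0) (hcop : Nat.Coprime p e)
    (hint : ∀ x y : K, IsIntegral ℤ x → IsIntegral ℤ y → ∃ z : ℤ, q x y = z)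
    (ht : ∀ s, IsIntegral ℤ (t s))
    (hspan : ∀ x : K, IsIntegral ℤ x → e • x ∈ Submodule.span ℤ (Set.range t)) :
    ∃ b : Module.Basis ι ℚ K, (∀ s, b s = t s) ∧
      ∀ x : K, IsIntegral ℤ x → ∀ s, ∃ z : ℤ, b.repr x s = z := by
  have hli := la_li q cl w t p r hp hr hG hw
  have he0 : (e : ℚ) ≠ 0 := by exact_mod_cast he
  have htop : ⊤ ≤ Submodule.span ℚ (Set.range t) := by
    rw [← (NumberField.integralBasis K).span_eq, Submodule.span_le]
    rintro _ ⟨i, rfl⟩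
    have h1 := hspan (NumberField.integralBasis K i) (by
      rw [NumberField.integralBasis_apply]; exact NumberField.RingOfIntegers.isIntegral_coe _)
    have h2 := Submodule.span_le_restrictScalars ℤ ℚ (Set.range t) h1
    rw [Submodule.restrictScalars_mem] at h2
    have h3 := Submodule.smul_mem _ ((e : ℚ)⁻¹) h2
    rwa [← Nat.cast_smul_eq_nsmul ℚ, smul_smul, inv_mul_cancel₀ he0, one_smul] at h3
  refine ⟨Module.Basis.mk hli htop, fun s => by simp, fun x hx s => ?_⟩
  set b := Module.Basis.mk hli htop with hb
  have hbs : ∀ s, b s = t s := fun s => by simp [hb]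
  obtain ⟨m, hm⟩ := (Submodule.mem_span_range_iff_exists_fun ℤ).1 (hspan x hx)
  have hm' : ∑ i, (m i : ℚ) • t i = (e : ℚ) • x := by
    rw [Nat.cast_smul_eq_nsmul, ← hm]
    exact Finset.sum_congr rfl fun i _ => by rw [Int.cast_smul_eq_zsmul]
  have hd := la_dual q cl w t p r hp hr hG hw (fun i => (m i : ℚ)) s
  rw [hm'] at hd
  choose z hz using fun s' => hint x (t s') hx (ht s')
  simp only [map_smul, LinearMap.smul_apply, hz, smul_eq_mul, ← Finset.mul_sum] at hd
  have hd2 : (p : ℤ) ^ r * m s = e * (z s + w (cl s) * ∑ s' with cl s' = cl s, z s') := by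
    have : (p : ℚ) ^ r * m s = e * (z s + w (cl s) * ∑ s' with cl s' = cl s, (z s' : ℚ)) := by
      rw [hd]; ring
    exact_mod_cast this
  have hdvd : (e : ℤ) ∣ m s := by
    refine IsCoprime.dvd_of_dvd_mul_left (x := (e : ℤ)) (y := (p : ℤ) ^ r) ?_ ⟨_, hd2⟩
    exact (Nat.isCoprime_iff_coprime.2 hcop.symm).pow_right
  obtain ⟨y, hy⟩ := hdvd
  refine ⟨y, ?_⟩
  have hr2 : b.repr ((e : ℚ) • x) s = m s := by
    rw [← hm']
    simp only [← hbs]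
    rw [b.repr_sum_self]
  rw [map_smul, Finsupp.smul_apply, hy, smul_eq_mul] at hr2
  push_cast at hr2
  exact mul_left_cancel₀ he0 hr2

include hp hr hG hw in
lemma la_det : (Matrix.of fun s s' => q (t s) (t s')).det * (p : ℚ) ^ Fintype.card α =
    (p : ℚ) ^ (r * Fintype.card ι) := by
  have hp0 : (p : ℚ) ≠ 0 := by exact_mod_cast hp.ne_zero
  let U : Matrix ι α ℚ := Matrix.of fun s a => if cl s = a then (w a : ℚ) / p else 0
  let V : Matrix α ι ℚ := Matrix.of fun a s => if cl s = a then 1 else 0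
  have h4 : (p : ℚ) ^ r = p * (p : ℚ) ^ (r - 1) := by
    rw [← pow_succ', Nat.sub_add_cancel hr]
  have h1 : (Matrix.of fun s s' => q (t s) (t s')) = (p : ℚ) ^ r • (1 - U * V) := by
    ext s s'
    simp only [Matrix.of_apply, hG, Matrix.smul_apply, Matrix.sub_apply, Matrix.one_apply,
      Matrix.mul_apply, U, V, smul_eq_mul, mul_sub]
    congr 1
    · simp
    · simp only [mul_ite, mul_one, mul_zero, Finset.sum_ite_eq, Finset.mem_univ, if_true]
      by_cases h : cl s = cl s'
      · rw [if_pos h, if_pos h, h4, h]; field_simp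
      · rw [if_neg h, if_neg h]
  have h2 : 1 - V * U = (p : ℚ)⁻¹ • (1 : Matrix α α ℚ) := by
    ext a a'
    simp only [Matrix.smul_apply, Matrix.sub_apply, Matrix.one_apply, Matrix.mul_apply, U, V,
      Matrix.of_apply, smul_eq_mul]
    by_cases h : a = a'
    · subst h
      simp only [if_true, mul_ite, ite_mul, one_mul, zero_mul, mul_zero]
      rw [Finset.sum_congr rfl (g := fun s => if cl s = a then (w a : ℚ) / p else 0)
        (fun s _ => by split_ifs <;> rfl), ← Finset.sum_filter, Finset.sum_const, nsmul_eq_mul]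
      have h3 : (w a : ℚ) * ((Finset.univ.filter (fun s' => cl s' = a)).card : ℚ) = p - 1 := by
        have := hw a
        rw [← Nat.cast_mul, this, Nat.cast_sub hp.one_le, Nat.cast_one]
      field_simp
      linear_combination -h3
    · rw [if_neg h, Finset.sum_eq_zero]
      · simp
      · intro s _
        by_cases h1 : cl s = a
        · have : cl s ≠ a' := by rw [h1]; exact h
          simp [this]
        · simp [h1]
  rw [h1, Matrix.det_smul, Matrix.det_one_sub_mul_comm, h2, Matrix.det_smul, Matrix.det_one,
    mul_one, mul_assoc, ← mul_pow, inv_mul_cancel₀ hp0, one_pow, mul_one, pow_mul]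

lemma la_gram (b : Module.Basis ι ℚ K)
    (hb : ∀ x : K, IsIntegral ℤ x → ∀ s, ∃ z : ℤ, b.repr x s = z)
    (hpos : 0 ≤ (Matrix.of fun s s' => q (b s) (b s')).det) :
    (Matrix.of fun s s' => q (b s) (b s')).det ≤ gramDet K q := by
  classical
  let E := b.indexEquiv (NumberField.integralBasis K)
  let c := NumberField.integralBasis K
  let b' := b.reindex E
  have h1 := LinearMap.BilinForm.toMatrix_mul_basis_toMatrix b' c q
  have h2 : gramDet K q = (LinearMap.BilinForm.toMatrix c q).det := by
    unfold gramDet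
    convert rfl using 2
    ext i j
    simp [LinearMap.BilinForm.toMatrix_apply, c, NumberField.integralBasis_apply]
  have h3 : (LinearMap.BilinForm.toMatrix b' q).det =
      (Matrix.of fun s s' => q (b s) (b s')).det := by
    rw [← Matrix.det_reindex_self E]
    congr 1
    ext i j
    simp [LinearMap.BilinForm.toMatrix_apply, b']
  have hQ : ∀ i j, ∃ z : ℤ, b'.toMatrix c i j = z := by
    intro i j
    have := hb (c j) (by
      simp only [c]; rw [NumberField.integralBasis_apply]
      exact NumberField.RingOfIntegers.isIntegral_coe _) (E.symm i)
    simpa [Module.Basis.toMatrix_apply, b'] using this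
  choose Z hZ using hQ
  have hdet : (b'.toMatrix c).det = ((Matrix.of Z).det : ℤ) := by
    have : b'.toMatrix c = (Matrix.of Z).map (Int.castRingHom ℚ) := by
      ext i j; simp [hZ]
    rw [this, ← RingHom.mapMatrix_apply, ← RingHom.map_det]; rfl
  have hne : (b'.toMatrix c).det ≠ 0 := by
    have := b'.toMatrix_mul_toMatrix_flip c
    intro h0
    have := congrArg Matrix.det this
    rw [Matrix.det_mul, h0, zero_mul, Matrix.det_one] at this
    exact zero_ne_one this
  have hge : 1 ≤ (b'.toMatrix c).det ^ 2 := by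
    rw [hdet] at hne ⊢
    have : (Matrix.of Z).det ≠ 0 := by exact_mod_cast hne
    have : 0 < (Matrix.of Z).det ^ 2 := by positivity
    exact_mod_cast this
  rw [h2, ← h1, Matrix.det_mul, Matrix.det_mul, Matrix.det_transpose, h3]
  nlinarith

lemma la_cover (b : Module.Basis ι ℚ K) (hbt : ∀ s, IsIntegral ℤ (b s))
    (hG : ∀ s s', q (b s) (b s') = (if s = s' then (p : ℚ) ^ r else 0) -
      (if cl s = cl s' then (w (cl s) : ℚ) * (p : ℚ) ^ (r - 1) else 0))
    (hp : p.Prime) (hr : 1 ≤ r)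
    (hw : ∀ a, w a * (Finset.univ.filter (fun s => cl s = a)).card = p - 1)
    (x : ℝ ⊗[ℚ] K) :
    ∃ c : 𝓞 K, LinearMap.BilinForm.baseChange ℝ q (x - (1 : ℝ) ⊗ₜ[ℚ] (c : K))
        (x - (1 : ℝ) ⊗ₜ[ℚ] (c : K)) ≤
      (p : ℝ) ^ (r - 1) * ∑ s, (((p : ℝ) ^ 2 + p + 1 - (w (cl s) : ℝ) ^ 2) / (12 * p)) := by
  let B := Algebra.TensorProduct.basis ℝ b
  let y : ι → ℝ := fun s => B.repr x s
  have hx : x = ∑ s, y s • ((1 : ℝ) ⊗ₜ[ℚ] b s) := by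
    conv_lhs => rw [← B.sum_repr x]
    refine Finset.sum_congr rfl fun s _ => ?_
    simp [y, B, Algebra.TensorProduct.basis_apply]
  have hw' : ∀ a, (p : ℝ) = w a * (Finset.univ.filter (fun s => cl s = a)).card + 1 := by
    intro a
    rw [← Nat.cast_mul, hw, Nat.cast_sub hp.one_le]; simp
  choose d hd using fun a => cov_main (Finset.univ.filter (fun s => cl s = a)) (p : ℝ) (w a)
    (Nat.cast_nonneg _) (hw' a) y
  let c : K := ∑ s, (d (cl s) s) • b s
  have hc : IsIntegral ℤ c := IsIntegral.sum _ fun s _ => (hbt s).zsmul _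
  refine ⟨⟨c, hc⟩, ?_⟩
  let z : ι → ℝ := fun s => y s - d (cl s) s
  have hxc : x - (1 : ℝ) ⊗ₜ[ℚ] c = ∑ s, z s • ((1 : ℝ) ⊗ₜ[ℚ] b s) := by
    rw [hx]
    simp only [c, TensorProduct.tmul_sum, z, sub_smul, Finset.sum_sub_distrib]
    congr 1
    refine Finset.sum_congr rfl fun s _ => ?_
    rw [TensorProduct.tmul_smul, Int.cast_smul_eq_zsmul]
  have h4 : (p : ℝ) ^ r = p * (p : ℝ) ^ (r - 1) := by
    rw [← pow_succ', Nat.sub_add_cancel hr]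
  have hval : LinearMap.BilinForm.baseChange ℝ q (∑ s, z s • ((1 : ℝ) ⊗ₜ[ℚ] b s))
      (∑ s, z s • ((1 : ℝ) ⊗ₜ[ℚ] b s)) = (p : ℝ) ^ (r - 1) * ∑ a, ((p : ℝ) *
        ∑ s with cl s = a, z s ^ 2 - w a * (∑ s with cl s = a, z s) ^ 2) := by
    have e1 : LinearMap.BilinForm.baseChange ℝ q (∑ s, z s • ((1 : ℝ) ⊗ₜ[ℚ] b s))
      (∑ s, z s • ((1 : ℝ) ⊗ₜ[ℚ] b s)) = ∑ s, ∑ s', z s * (z s' * (q (b s) (b s') : ℝ)) := by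
      rw [map_sum]
      simp only [map_sum, LinearMap.sum_apply]
      rw [Finset.sum_comm]
      refine Finset.sum_congr rfl fun s _ => ?_
      refine Finset.sum_congr rfl fun s' _ => ?_
      simp only [map_smul, LinearMap.smul_apply, smul_eq_mul]
      rw [LinearMap.BilinForm.baseChange_tmul]
      simp
      try ring
    rw [e1, Finset.sum_sub_distrib, ← Finset.mul_sum, Finset.sum_fiberwise, mul_sub]
    have e2 : ∀ s s', z s * (z s' * (q (b s) (b s') : ℝ)) =
        (if s = s' then (p : ℝ) ^ r * z s ^ 2 else 0) -
        (if cl s = cl s' then (w (cl s) : ℝ) * (p : ℝ) ^ (r - 1) * z s * z s' else 0) := by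
      intro s s'
      rw [hG]
      by_cases h1 : s = s'
      · subst h1; simp; ring
      · by_cases h2 : cl s = cl s'
        · simp [h1, h2]; ring
        · simp [h1, h2]
    simp only [e2, Finset.sum_sub_distrib]
    congr 1
    · simp only [Finset.sum_ite_eq, Finset.mem_univ, if_true]
      rw [← Finset.mul_sum, h4]; ring
    · rw [← Finset.sum_fiberwise (s := Finset.univ) (g := cl), Finset.mul_sum]
      refine Finset.sum_congr rfl fun a _ => ?_
      rw [sq, Finset.sum_mul_sum, Finset.mul_sum, Finset.mul_sum]
      refine Finset.sum_congr rfl fun s hs => ?_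
      rw [← Finset.sum_filter, Finset.mul_sum, Finset.mul_sum]
      have hs' : cl s = a := (Finset.mem_filter.1 hs).2
      subst hs'
      have : (Finset.univ.filter fun s' => cl s = cl s') =
        (Finset.univ.filter fun s' => cl s' = cl s) := by
        ext s'; simp [eq_comm]
      rw [this]
      exact Finset.sum_congr rfl fun s' _ => by ring
  change LinearMap.BilinForm.baseChange ℝ q (x - (1 : ℝ) ⊗ₜ[ℚ] c) (x - (1 : ℝ) ⊗ₜ[ℚ] c) ≤ _
  rw [hxc, hval]
  refine mul_le_mul_of_nonneg_left ?_ (by positivity)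
  rw [← Finset.sum_fiberwise (s := Finset.univ) (g := cl)]
  refine Finset.sum_le_sum fun a _ => ?_
  have e3 : ∑ s with cl s = a, (((p : ℝ) ^ 2 + p + 1 - (w (cl s) : ℝ) ^ 2) / (12 * p)) =
      (Finset.univ.filter (fun s => cl s = a)).card * ((p : ℝ) ^ 2 + p + 1 - (w a : ℝ) ^ 2) /
        (12 * p) := by
    rw [Finset.sum_congr rfl (g := fun _ => (((p : ℝ) ^ 2 + p + 1 - (w a : ℝ) ^ 2) / (12 * p)))
      (fun s hs => by rw [(Finset.mem_filter.1 hs).2]), Finset.sum_const, nsmul_eq_mul]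
    ring
  rw [e3]
  refine le_trans (le_of_eq ?_) (hd a)
  have e4 : ∀ f : ℝ → ℝ, ∑ s with cl s = a, f (z s) = ∑ s with cl s = a, f (y s - d a s) :=
    fun f => Finset.sum_congr rfl fun s hs => by
      simp only [z]; rw [(Finset.mem_filter.1 hs).2]
  have e5 := e4 (fun t => t ^ 2)
  have e6 := e4 (fun t => t)
  rw [e5, e6]

end linalg

theorem hermiteLikeThickness_le_of_oddPrimePower_conductor
    (p r : ℕ) (hp : p.Prime) (hodd : Odd p) (hr : 1 ≤ r)
    (K : Type*) [Field K] [NumberField K]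
    (hcond : HasConductor K ⟨p ^ r, pow_pos hp.pos r⟩)
    (e k υ : ℕ)
    -- `e = [ℚ(ζ_{p^r}) : K]`, i.e. `e · [K : ℚ] = φ(p^r)`
    (he : e * Module.finrank ℚ K = (p - 1) * p ^ (r - 1))
    -- `k = (p^{r-1} - 1)/e`
    (hk : k * e = p ^ (r - 1) - 1)
    -- `υ = r·n - (p^{r-1} - 1)/e - 1`
    (hυ : υ + k + 1 = r * Module.finrank ℚ K)
    -- `σ` is complex conjugation on `K` (the identity if `K` is totally real)
    (σ : K ≃ₐ[ℚ] K)
    (hσ : ∀ φ : K →+* ℂ, ∀ x : K, φ (σ x) = starRingEnd ℂ (φ x)) :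
    -- `q(x, y) = Tr_{K/ℚ}(x · σ(y))`, extended ℝ-bilinearly to `ℝ ⊗ K`
    letI q : K →ₗ[ℚ] K →ₗ[ℚ] ℚ := (Algebra.traceForm ℚ K).compl₂ σ.toLinearMap
    letI qR := LinearMap.BilinForm.baseChange ℝ q
    letI n := Module.finrank ℚ K
    (⨆ x : ℝ ⊗[ℚ] K, ⨅ c : 𝓞 K,
        qR (x - (1 : ℝ) ⊗ₜ[ℚ] (c : K)) (x - (1 : ℝ) ⊗ₜ[ℚ] (c : K))) ≤
      (n : ℝ) * (p : ℝ) ^ ((r : ℝ) - (υ : ℝ) / (n : ℝ)) *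
        (((p : ℝ) ^ (r + 1) + (p : ℝ) ^ r + 1 - (e : ℝ) ^ 2) / (12 * (p : ℝ) ^ (r + 1))) *
        ((gramDet K q : ℝ) ^ ((1 : ℝ) / (n : ℝ))) := by
  let q : K →ₗ[ℚ] K →ₗ[ℚ] ℚ := (Algebra.traceForm ℚ K).compl₂ σ.toLinearMap
  let qR := LinearMap.BilinForm.baseChange ℝ q
  let n := Module.finrank ℚ K
  change e * n = _ at he
  change _ = r * n at hυ
  change (⨆ x : ℝ ⊗[ℚ] K, ⨅ c : 𝓞 K,
        qR (x - (1 : ℝ) ⊗ₜ[ℚ] (c : K)) (x - (1 : ℝ) ⊗ₜ[ℚ] (c : K))) ≤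
      (n : ℝ) * (p : ℝ) ^ ((r : ℝ) - (υ : ℝ) / (n : ℝ)) *
        (((p : ℝ) ^ (r + 1) + (p : ℝ) ^ r + 1 - (e : ℝ) ^ 2) / (12 * (p : ℝ) ^ (r + 1))) *
        ((gramDet K q : ℝ) ^ ((1 : ℝ) / (n : ℝ)))
  have : NeZero (p ^ r) := ⟨(pow_pos hp.pos r).ne'⟩
  have hn : 0 < n := Module.finrank_pos
  obtain ⟨⟨φ⟩, -⟩ := hcond
  let L := CyclotomicField (p ^ r) ℚ
  have hcyc : IsCyclotomicExtension {p ^ r} ℚ L := by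
    have h0 := CyclotomicField.isCyclotomicExtension (p ^ r) ℚ
    convert h0
    · rfl
    · exact Subsingleton.elim _ _
  let φ' : K →+* L := φ.toRingHom
  letI : Algebra K L := φ'.toAlgebra
  have hgal0 : IsGalois ℚ L := IsCyclotomicExtension.isGalois {p ^ r} ℚ L
  have hgal : IsGalois K L := IsGalois.tower_top_of_isGalois ℚ K L
  have hfd : FiniteDimensional K L := Module.Finite.of_restrictScalars_finite ℚ K L
  have hp1 : 0 < p - 1 := Nat.sub_pos_of_lt hp.one_lt
  have hfin : Module.finrank K L = e := by
    have h1 := Module.finrank_mul_finrank ℚ K L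
    have h2 : Module.finrank ℚ L = (p ^ r).totient :=
      IsCyclotomicExtension.finrank L (Polynomial.cyclotomic.irreducible_rat (NeZero.pos _))
    rw [h2, Nat.totient_prime_pow hp (by omega), mul_comm, mul_comm (p ^ (r - 1)), ← he] at h1
    exact Nat.eq_of_mul_eq_mul_right hn h1
  have he0 : e ≠ 0 := by rw [← hfin]; exact Module.finrank_pos.ne'
  have hcop : Nat.Coprime p e := by
    rw [hp.coprime_iff_not_dvd]
    intro hpe
    rcases Nat.eq_or_lt_of_le hr with h1 | h1
    · have h2 : p ∣ p - 1 := by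
        have : e ∣ (p - 1) * p ^ (r - 1) := ⟨_, he.symm⟩
        rw [← h1] at this
        simpa using hpe.trans this
      exact absurd (Nat.le_of_dvd hp1 h2) (by omega)
    · have h2 : p ∣ p ^ (r - 1) - 1 := by rw [← hk]; exact hpe.mul_left k
      have h3 : p ∣ p ^ (r - 1) := dvd_pow_self p (by omega)
      have h4 := (Nat.dvd_sub_iff_right (Nat.one_le_pow _ _ hp.pos) h3).1 h2
      exact hp.one_lt.ne' (Nat.dvd_one.1 h4)
  have hcard : Fintype.card (L ≃ₐ[K] L) = e := by
    rw [← Nat.card_eq_fintype_card, IsGalois.card_aut_eq_finrank, hfin]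
  have hζ : IsPrimitiveRoot (IsCyclotomicExtension.zeta (p ^ r) ℚ L) (p ^ r) :=
    IsCyclotomicExtension.zeta_spec (p ^ r) ℚ L
  obtain ⟨S, hS1, hS2, hS3, hS4, hS5⟩ := exists_S p r hp hr K (zchi p r hζ (K := K))
    (zchi_free p r hp hr hζ (by rw [Nat.card_eq_fintype_card, hcard]; exact hcop))
  rw [hcard] at hS3
  let A : Finset (ZMod (p ^ r)) := S.image (fun s => (p : ZMod (p ^ r)) * s)
  let cl : S → A := fun s => ⟨(p : ZMod (p ^ r)) * s, Finset.mem_image_of_mem _ s.2⟩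
  let w : A → ℕ := fun a => if (a : ZMod (p ^ r)) = 0 then e else 1
  let t : S → K := fun s => ztr p r hζ (s : ZMod (p ^ r))
  have hqapp : ∀ x y, q x y = Algebra.trace ℚ K (x * σ y) := fun x y => rfl
  have hcleq : ∀ s s' : S, cl s = cl s' ↔ (p : ZMod (p ^ r)) * s = p * s' := fun s s' =>
    Subtype.ext_iff
  have hG : ∀ s s', q (t s) (t s') = (if s = s' then (p : ℚ) ^ r else 0) -
      (if cl s = cl s' then (w (cl s) : ℚ) * (p : ℚ) ^ (r - 1) else 0) := by
    intro s s'
    rw [hqapp, ztr_gram p r hp hr hζ σ hσ, Finset.sum_sub_distrib]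
    congr 1
    · rw [Finset.sum_eq_single 1]
      · simp only [map_one, Units.val_one, one_mul, Subtype.ext_iff]
      · intro g _ hg
        rw [if_neg]
        exact fun h => hg (hS1 s s.2 s' s'.2 g h)
      · simp
    · by_cases h : cl s = cl s'
      · rw [if_pos h]
        have h' := (hcleq s s').1 h
        by_cases h0 : (p : ZMod (p ^ r)) * s = 0
        · have h0' : (p : ZMod (p ^ r)) * s' = 0 := by rw [← h', h0]
          have hw1 : w (cl s) = e := if_pos h0
          rw [hw1]
          simp [h0, h0', hcard]
        · have hw1 : w (cl s) = 1 := if_neg h0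
          rw [hw1, Finset.sum_eq_single 1]
          · simp [h']
          · intro g _ hg
            rw [if_neg]
            intro hh
            rcases (hS2 s s.2 s' s'.2 g hh).2 with h3 | h3
            · exact h0 h3
            · exact hg h3
          · simp
      · rw [if_neg h]
        refine Finset.sum_eq_zero fun g _ => if_neg fun hh => h ?_
        exact (hcleq s s').2 (hS2 s s.2 s' s'.2 g hh).1
  have hcount : ∀ a : ZMod (p ^ r), ∀ ha : a ∈ A,
      (Finset.univ.filter (fun s : S => cl s = ⟨a, ha⟩)).card =
      (S.filter (fun s => (p : ZMod (p ^ r)) * s = a)).card := by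
    intro a ha
    refine Finset.card_bij (fun s _ => (s : ZMod (p ^ r))) ?_ ?_ ?_
    · intro s hs
      have := (Finset.mem_filter.1 hs).2
      exact Finset.mem_filter.2 ⟨s.2, congrArg Subtype.val this⟩
    · intro s _ s' _ h; exact Subtype.ext h
    · intro s hs
      have := Finset.mem_filter.1 hs
      exact ⟨⟨s, this.1⟩, Finset.mem_filter.2 ⟨Finset.mem_univ _, Subtype.ext this.2⟩, rfl⟩
  have hw : ∀ a, w a * (Finset.univ.filter (fun s => cl s = a)).card = p - 1 := by
    rintro ⟨a, ha⟩
    rw [hcount a ha]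
    by_cases h0 : a = 0
    · have hw1 : w ⟨a, ha⟩ = e := if_pos h0
      rw [hw1, h0, mul_comm, hS3]
    · have hw1 : w ⟨a, ha⟩ = 1 := if_neg h0
      obtain ⟨s, hs, hsa⟩ := Finset.mem_image.1 ha
      rw [hw1, one_mul, ← hsa]
      exact hS4 s hs (by rw [hsa]; exact h0)
  have ht : ∀ s, IsIntegral ℤ (t s) := fun s => ztr_integral p r hζ _
  have hint : ∀ x y : K, IsIntegral ℤ x → IsIntegral ℤ y → ∃ z : ℤ, q x y = z := by
    intro x y hx hy
    rw [hqapp]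
    have h1 : IsIntegral ℤ (x * σ y) := hx.mul (hy.map σ)
    have h2 : IsIntegral ℤ (Algebra.trace ℚ K (x * σ y)) := Algebra.isIntegral_trace h1
    obtain ⟨z, hz⟩ := IsIntegrallyClosed.isIntegral_iff.1 h2
    exact ⟨z, by rw [← hz]; simp⟩
  have hspan : ∀ x : K, IsIntegral ℤ x → e • x ∈ Submodule.span ℤ (Set.range t) := by
    intro x hx
    have h1 := ztr_span p r hp hζ x hx
    rw [hfin] at h1
    refine (Submodule.span_le.2 ?_) h1
    rintro _ ⟨i, rfl⟩
    have h2 := hS5 (ztr p r hζ) (ztr_chi p r hζ) (ztr_fiber p r hp hr hζ) i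
    rw [Set.image_eq_range] at h2
    exact h2
  obtain ⟨b, hbt, hb⟩ := la_basis q cl w t p r hp hr hG hw e he0 hcop hint ht hspan
  have hSn : S.card = n := by
    have := Module.finrank_eq_card_basis b
    rw [Fintype.card_coe] at this
    exact this.symm
  set m := (S.filter (fun s => (p : ZMod (p ^ r)) * s = 0)).card with hm
  -- counting
  have hsumw : ∀ f : ℕ → ℝ, ∑ s, f (w (cl s)) = m * f e + (n - m) * f 1 := by
    intro f
    have h1 : ∑ s, f (w (cl s)) = ∑ s ∈ S, f (if (p : ZMod (p ^ r)) * s = 0 then e else 1) :=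
      Finset.sum_coe_sort S (fun s => f (if (p : ZMod (p ^ r)) * s = 0 then e else 1))
    have h2 := Finset.card_filter_add_card_filter_not (s := S)
      (fun s => (p : ZMod (p ^ r)) * s = 0)
    rw [← hm, hSn] at h2
    have h3 : ((S.filter (fun s => ¬ (p : ZMod (p ^ r)) * s = 0)).card : ℝ) = n - m := by
      rw [← h2]; push_cast; ring
    rw [h1, ← Finset.sum_filter_add_sum_filter_not S (fun s => (p : ZMod (p ^ r)) * s = 0)]
    rw [Finset.sum_congr rfl (g := fun _ => f e)
      (fun s hs => by rw [if_pos (Finset.mem_filter.1 hs).2]), Finset.sum_const, nsmul_eq_mul]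
    rw [Finset.sum_congr rfl (g := fun _ => f 1)
      (fun s hs => by rw [if_neg (Finset.mem_filter.1 hs).2]), Finset.sum_const, nsmul_eq_mul, h3]
  have hnm : n = m * p ^ (r - 1) := by
    have h1 : e * n = e * (m * p ^ (r - 1)) := by
      rw [he, ← hS3]; ring
    exact Nat.eq_of_mul_eq_mul_left (Nat.pos_of_ne_zero he0) h1
  have hP : (p : ℝ) ^ r = p * (p : ℝ) ^ (r - 1) := by
    rw [← pow_succ', Nat.sub_add_cancel hr]
  have hpR : (0 : ℝ) < p := by exact_mod_cast hp.pos
  have hS3R : (m : ℝ) * e = p - 1 := by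
    have := congrArg (Nat.cast : ℕ → ℝ) hS3
    rw [Nat.cast_mul, Nat.cast_sub hp.one_le, Nat.cast_one] at this
    exact this
  have hkR : (k : ℝ) * e = (p : ℝ) ^ (r - 1) - 1 := by
    have := congrArg (Nat.cast : ℕ → ℝ) hk
    rw [Nat.cast_mul, Nat.cast_sub (Nat.one_le_pow _ _ hp.pos), Nat.cast_one, Nat.cast_pow] at this
    exact this
  have hnmR : (n : ℝ) = m * (p : ℝ) ^ (r - 1) := by exact_mod_cast hnm
  have hA : Fintype.card A = k + 1 := by
    have h1 := hsumw (fun i => (i : ℝ))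
    have h2 : ∑ s, (w (cl s) : ℝ) = Fintype.card A * ((p : ℝ) - 1) := by
      rw [← Finset.sum_fiberwise (s := Finset.univ) (g := cl)]
      rw [Finset.sum_congr rfl (g := fun _ => ((p : ℝ) - 1)), Finset.sum_const, nsmul_eq_mul,
        Finset.card_univ]
      intro a _
      rw [Finset.sum_congr rfl (g := fun _ => (w a : ℝ))
        (fun s hs => by rw [(Finset.mem_filter.1 hs).2]), Finset.sum_const, nsmul_eq_mul,
        mul_comm, ← Nat.cast_mul, hw, Nat.cast_sub hp.one_le, Nat.cast_one]
    rw [h2, hnmR, Nat.cast_one] at h1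
    have h3 : (Fintype.card A : ℝ) * ((p : ℝ) - 1) = (k + 1) * ((p : ℝ) - 1) := by
      rw [h1]
      linear_combination (1 + (k : ℝ)) * hS3R - m * hkR
    have h4 : (p : ℝ) - 1 ≠ 0 := by
      have : (1 : ℝ) < p := by exact_mod_cast hp.one_lt
      linarith
    exact_mod_cast mul_right_cancel₀ h4 h3
  have hdet : (p : ℚ) ^ υ ≤ gramDet K q := by
    have h1 := la_det q cl w t p r hp hr hG hw
    have hp0 : (p : ℚ) ≠ 0 := by exact_mod_cast hp.ne_zero
    have h2 : (Matrix.of fun s s' => q (t s) (t s')).det = (p : ℚ) ^ υ := by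
      apply mul_right_cancel₀ (pow_ne_zero (Fintype.card A) hp0)
      rw [h1, ← pow_add, hA, Fintype.card_coe, hSn, ← add_assoc, hυ]
    have h3 := la_gram q b hb
    simp only [hbt] at h3
    rw [h2] at h3
    exact h3 (by positivity)
  have hdetR : (p : ℝ) ^ υ ≤ (gramDet K q : ℝ) := by exact_mod_cast hdet
  have hnR : (0 : ℝ) < n := by exact_mod_cast hn
  have hbound : ∑ s, (((p : ℝ) ^ 2 + p + 1 - (w (cl s) : ℝ) ^ 2) / (12 * p)) * (p : ℝ) ^ (r - 1) =
      (n : ℝ) * (p : ℝ) ^ r *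
        (((p : ℝ) ^ (r + 1) + (p : ℝ) ^ r + 1 - (e : ℝ) ^ 2) / (12 * (p : ℝ) ^ (r + 1))) := by
    rw [hsumw (fun i => (((p : ℝ) ^ 2 + p + 1 - (i : ℝ) ^ 2) / (12 * p)) * (p : ℝ) ^ (r - 1)),
      pow_succ (p : ℝ) r, hP, hnmR]
    have hq0 : (p : ℝ) ^ (r - 1) ≠ 0 := (pow_pos hpR _).ne'
    field_simp
    push_cast
    ring
  have hC : 0 ≤ (((p : ℝ) ^ (r + 1) + (p : ℝ) ^ r + 1 - (e : ℝ) ^ 2) / (12 * (p : ℝ) ^ (r + 1))) := by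
    apply div_nonneg _ (by positivity)
    have h1 : e ≤ p := by
      have : e ∣ p - 1 := ⟨m, by rw [← hS3, mul_comm]⟩
      have := Nat.le_of_dvd hp1 this
      omega
    have h2 : e ^ 2 ≤ p ^ (r + 1) :=
      (Nat.pow_le_pow_left h1 2).trans (Nat.pow_le_pow_right hp.pos (by omega))
    have h3 : (e : ℝ) ^ 2 ≤ (p : ℝ) ^ (r + 1) := by exact_mod_cast h2
    have : (0 : ℝ) < (p : ℝ) ^ r := by positivity
    linarith
  have hrhs : (n : ℝ) * (p : ℝ) ^ r *
        (((p : ℝ) ^ (r + 1) + (p : ℝ) ^ r + 1 - (e : ℝ) ^ 2) / (12 * (p : ℝ) ^ (r + 1))) ≤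
      (n : ℝ) * (p : ℝ) ^ ((r : ℝ) - (υ : ℝ) / (n : ℝ)) *
        (((p : ℝ) ^ (r + 1) + (p : ℝ) ^ r + 1 - (e : ℝ) ^ 2) / (12 * (p : ℝ) ^ (r + 1))) *
        ((gramDet K q : ℝ) ^ ((1 : ℝ) / (n : ℝ))) := by
    have h1 : ((p : ℝ) ^ υ) ^ ((1 : ℝ) / (n : ℝ)) ≤ (gramDet K q : ℝ) ^ ((1 : ℝ) / (n : ℝ)) :=
      Real.rpow_le_rpow (by positivity) hdetR (by positivity)
    have h2 : ((p : ℝ) ^ υ) ^ ((1 : ℝ) / (n : ℝ)) = (p : ℝ) ^ ((υ : ℝ) / (n : ℝ)) := by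
      rw [← Real.rpow_natCast, ← Real.rpow_mul hpR.le]
      congr 1; ring
    have h3 : (p : ℝ) ^ r = (p : ℝ) ^ ((r : ℝ) - (υ : ℝ) / (n : ℝ)) * (p : ℝ) ^ ((υ : ℝ) / (n : ℝ)) := by
      rw [← Real.rpow_add hpR, sub_add_cancel, Real.rpow_natCast]
    rw [h2] at h1
    set C := (((p : ℝ) ^ (r + 1) + (p : ℝ) ^ r + 1 - (e : ℝ) ^ 2) / (12 * (p : ℝ) ^ (r + 1)))
    calc (n : ℝ) * (p : ℝ) ^ r * C
        = (n : ℝ) * (p : ℝ) ^ ((r : ℝ) - (υ : ℝ) / (n : ℝ)) * C * (p : ℝ) ^ ((υ : ℝ) / (n : ℝ)) := by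
          rw [h3]; ring
      _ ≤ _ := mul_le_mul_of_nonneg_left h1 (by positivity)
  refine le_trans (ciSup_le fun x => ?_) hrhs
  obtain ⟨c, hc⟩ := la_cover q cl w p r b (fun s => by rw [hbt]; exact ht s)
    (fun s s' => by rw [hbt, hbt]; exact hG s s') hp hr hw x
  rw [mul_comm, Finset.sum_mul, hbound] at hc
  by_cases hbdd : BddBelow (Set.range fun c : 𝓞 K =>
      qR (x - (1 : ℝ) ⊗ₜ[ℚ] (c : K)) (x - (1 : ℝ) ⊗ₜ[ℚ] (c : K)))
  · exact (ciInf_le hbdd c).trans hc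
  · rw [Real.iInf_of_not_bddBelow hbdd]
    positivity
end

section
/- Let r ≥ 3 be an integer, ζ a primitive 2^r-th root of unity, and K an abelian number field of conductor 2^r, i.e., K ⊆ ℚ(ζ) but K ⊄ ℚ(ζ²). Then K = ℚ(ζ), or K = ℚ(ζ + ζ^{-1}), or K = ℚ(ζ − ζ^{-1}). -/
open IntermediateField

lemma aux_pow {F L : Type*} [Field F] [Field L] [Algebra F L] (r : ℕ) (hr : 3 ≤ r) (ζ : L)
    (hζ : IsPrimitiveRoot ζ (2 ^ r)) (σ : L ≃ₐ[F] L) :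
    ∃ a : ℤ, Odd a ∧ σ ζ = ζ ^ a := by
  have h1 : IsPrimitiveRoot (σ ζ) (2 ^ r) := hζ.map_of_injective σ.injective
  have : NeZero (2 ^ r) := ⟨by positivity⟩
  obtain ⟨i, hi, h⟩ := hζ.eq_pow_of_pow_eq_one h1.pow_eq_one
  refine ⟨i, ?_, by rw [zpow_natCast, h]⟩
  rw [← h, hζ.pow_iff_coprime (by positivity)] at h1
  rw [Nat.coprime_pow_right_iff (by omega), Nat.coprime_two_right] at h1
  exact_mod_cast h1

lemma aux_half {L : Type*} [Field L] (r : ℕ) (hr : 3 ≤ r) (ζ : L)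
    (hζ : IsPrimitiveRoot ζ (2 ^ r)) (b : ℤ) (hb : (2:ℤ) ^ r ∣ 2 * b) :
    ζ ^ b = 1 ∨ ζ ^ b = -1 := by
  have : (ζ ^ b) ^ 2 = 1 := by
    rw [← zpow_natCast, ← zpow_mul, hζ.zpow_eq_one_iff_dvd]
    push_cast
    rwa [mul_comm]
  rcases mul_eq_zero.mp (show (ζ ^ b - 1) * (ζ ^ b + 1) = 0 by linear_combination this) with h | h
  · exact Or.inl (sub_eq_zero.mp h)
  · exact Or.inr (eq_neg_of_add_eq_zero_left h)

lemma aux_invol {L : Type*} [Field L] (r : ℕ) (hr : 3 ≤ r) (ζ : L)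
    (hζ : IsPrimitiveRoot ζ (2 ^ r)) (a : ℤ) (ha : Odd a) (h : ζ ^ (a * a) = ζ) :
    ((2:ℤ)^r ∣ 2 * (a - 1) ∧ (ζ ^ a = ζ ∨ ζ ^ a = -ζ)) ∨
    ((2:ℤ)^r ∣ 2 * (a + 1) ∧ (ζ ^ a = ζ⁻¹ ∨ ζ ^ a = -ζ⁻¹)) := by
  have h0 : ζ ≠ 0 := hζ.ne_zero (by positivity)
  have h1 : ζ ^ (a * a - 1) = 1 := by rw [zpow_sub_one₀ h0, h, mul_inv_cancel₀ h0]
  rw [hζ.zpow_eq_one_iff_dvd] at h1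
  push_cast at h1
  obtain ⟨k, rfl⟩ := ha
  have cop : ∀ m : ℤ, Odd m → IsCoprime ((2:ℤ)^r) m := fun m hm => by
    apply IsCoprime.pow_left
    obtain ⟨l, rfl⟩ := hm
    exact ⟨-l, 1, by ring⟩
  rcases Int.even_or_odd k with hk | hk
  · left
    have hd : (2:ℤ)^r ∣ 2 * ((2 * k + 1) - 1) := by
      apply (cop (k+1) hk.add_one).dvd_of_dvd_mul_right
      have e : (2 * k + 1) * (2 * k + 1) - 1 = 2 * ((2 * k + 1) - 1) * (k + 1) := by ring
      rwa [e] at h1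
    refine ⟨hd, ?_⟩
    have e : ζ ^ (2 * k + 1) = ζ ^ ((2 * k + 1) - 1) * ζ := by
      rw [zpow_sub_one₀ h0]; field_simp
    rw [e]
    rcases aux_half r hr ζ hζ _ hd with h | h <;> rw [h] <;> simp
  · right
    have hd : (2:ℤ)^r ∣ 2 * ((2 * k + 1) + 1) := by
      apply (cop k hk).dvd_of_dvd_mul_right
      have e : (2 * k + 1) * (2 * k + 1) - 1 = 2 * ((2 * k + 1) + 1) * k := by ring
      rwa [e] at h1
    refine ⟨hd, ?_⟩
    have e : ζ ^ (2 * k + 1) = ζ ^ ((2 * k + 1) + 1) * ζ⁻¹ := by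
      rw [zpow_add_one₀ h0 (2 * k + 1)]; field_simp
    rw [e]
    rcases aux_half r hr ζ hζ _ hd with h | h <;> rw [h] <;> simp

lemma aux_main {F L : Type*} [Field F] [Field L] [Algebra F L] (r : ℕ) (hr : 3 ≤ r) (ζ : L)
    (hζ : IsPrimitiveRoot ζ (2 ^ r)) (htop : F⟮ζ⟯ = ⊤) [FiniteDimensional F L] [IsGalois F L]
    (hcard : ∀ σ : L ≃ₐ[F] L, ∃ n : ℕ, σ ^ (2 ^ n) = 1)
    (K : IntermediateField F L) (h2 : ¬ K ≤ F⟮ζ ^ 2⟯) :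
    K = ⊤ ∨ K = F⟮ζ + ζ⁻¹⟯ ∨ K = F⟮ζ - ζ⁻¹⟯ := by
  classical
  have h0 : ζ ≠ 0 := hζ.ne_zero (by positivity)
  have hext : ∀ σ τ : L ≃ₐ[F] L, σ ζ = τ ζ → σ = τ := by
    intro σ τ h
    apply AlgEquiv.ext
    intro x
    have hx : x ∈ F⟮ζ⟯ := by rw [htop]; trivial
    induction hx using IntermediateField.adjoin_induction with
    | mem x hx => rw [Set.mem_singleton_iff.mp hx]; exact h
    | algebraMap x => simp
    | add x y _ _ hx hy => simp [hx, hy]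
    | inv x _ hx => simp [hx]
    | mul x y _ _ hx hy => simp [hx, hy]
  have hle : ∀ (x : L), (∀ σ ∈ K.fixingSubgroup, σ x = x) → F⟮x⟯ ≤ K := by
    intro x hx
    rw [IntermediateField.adjoin_simple_le_iff, ← IsGalois.fixedField_fixingSubgroup K,
      IntermediateField.mem_fixedField_iff]
    exact hx
  have hge : ∀ (x : L), (∀ σ : L ≃ₐ[F] L, σ x = x → σ ∈ K.fixingSubgroup) → K ≤ F⟮x⟯ := by
    intro x hx
    rw [← IsGalois.fixedField_fixingSubgroup F⟮x⟯, IntermediateField.le_iff_le]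
    intro σ hσ
    apply hx
    rw [IntermediateField.mem_fixingSubgroup_iff] at hσ
    exact hσ x (IntermediateField.mem_adjoin_simple_self F x)
  have hneg : ∀ σ ∈ K.fixingSubgroup, σ ζ ≠ -ζ := by
    intro σ hσ hs
    apply h2
    apply hge
    intro τ hτ
    rw [map_pow, sq_eq_sq_iff_eq_or_eq_neg] at hτ
    rcases hτ with h | h
    · rw [hext τ 1 h]; exact one_mem _
    · rw [hext τ σ (h.trans hs.symm)]; exact hσ
  have hinv : ∀ σ : L ≃ₐ[F] L, σ ^ 2 = 1 → ∀ a : ℤ, σ ζ = ζ ^ a → ζ ^ (a * a) = ζ := by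
    intro σ hσ a ha
    have : (σ ^ 2) ζ = ζ := by rw [hσ]; rfl
    rw [pow_two, AlgEquiv.mul_apply, ha, map_zpow₀, ha, ← zpow_mul] at this
    exact this
  have hsq : ∀ σ ∈ K.fixingSubgroup, σ ^ 2 = 1 := by
    intro σ hσ
    by_contra hne
    have hex := hcard σ
    set n := Nat.find hex with hn
    have hspec : σ ^ 2 ^ n = 1 := Nat.find_spec hex
    have hn2 : 2 ≤ n := by
      by_contra hlt
      have : n = 0 ∨ n = 1 := by omega
      rcases this with h | h
      · rw [h] at hspec; simp at hspec; simp [hspec] at hne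
      · rw [h] at hspec; simp at hspec; exact hne hspec
    have hmin : σ ^ 2 ^ (n - 1) ≠ 1 := Nat.find_min hex (by omega)
    obtain ⟨m, hm⟩ : ∃ m, n = m + 2 := ⟨n - 2, by omega⟩
    rw [hm] at hmin hspec
    obtain ⟨b, hb, hbe⟩ := aux_pow r hr ζ hζ (σ ^ 2 ^ m)
    have hτ : (σ ^ 2 ^ (m + 1)) ζ = ζ ^ (b * b) := by
      rw [pow_succ, pow_mul, pow_two, AlgEquiv.mul_apply, hbe, map_zpow₀, hbe, ← zpow_mul]
    have hτ2 : (σ ^ 2 ^ (m + 1)) ^ 2 = 1 := by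
      rw [← pow_mul, ← pow_succ]; exact hspec
    rcases aux_invol r hr ζ hζ (b * b) (hb.mul hb) (hinv _ hτ2 _ hτ) with ⟨_, h | h⟩ | ⟨h, _⟩
    · exact hmin (hext _ 1 (hτ.trans h))
    · exact hneg _ (pow_mem hσ _) (hτ.trans h)
    · have h8 : (8:ℤ) ∣ 2 * (b * b + 1) := (pow_dvd_pow (2:ℤ) hr).trans h
      obtain ⟨k, rfl⟩ := hb
      obtain ⟨c, hc⟩ := h8
      ring_nf at hc
      omega
  have hcases : ∀ σ ∈ K.fixingSubgroup, σ = 1 ∨ σ ζ = ζ⁻¹ ∨ σ ζ = -ζ⁻¹ := by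
    intro σ hσ
    obtain ⟨a, ha, hae⟩ := aux_pow r hr ζ hζ σ
    rcases aux_invol r hr ζ hζ a ha (hinv _ (hsq σ hσ) _ hae) with ⟨_, h | h⟩ | ⟨_, h⟩
    · exact Or.inl (hext _ 1 (hae.trans h))
    · exact absurd (hae.trans h) (hneg _ hσ)
    · rw [← hae] at h; exact Or.inr h
  by_cases hA : ∃ σ ∈ K.fixingSubgroup, σ ζ = ζ⁻¹
  · right; left
    obtain ⟨σ, hσ, hs⟩ := hA
    apply le_antisymm
    · apply hge
      intro τ hτ
      rw [map_add, map_inv₀] at hτ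
      have ht0 : τ ζ ≠ 0 := by simpa using h0
      have : (τ ζ - ζ) * (τ ζ - ζ⁻¹) = 0 := by
        field_simp at hτ ⊢
        linear_combination hτ
      rcases mul_eq_zero.mp this with h | h
      · rw [hext τ 1 (sub_eq_zero.mp h)]; exact one_mem _
      · rw [hext τ σ ((sub_eq_zero.mp h).trans hs.symm)]; exact hσ
    · apply hle
      intro τ hτ
      rcases hcases τ hτ with h | h | h
      · simp [h]
      · simp [h, add_comm]
      · exfalso
        apply hneg (σ * τ) (mul_mem hσ hτ)
        simp [AlgEquiv.mul_apply, h, hs]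
  by_cases hB : ∃ σ ∈ K.fixingSubgroup, σ ζ = -ζ⁻¹
  · right; right
    obtain ⟨σ, hσ, hs⟩ := hB
    apply le_antisymm
    · apply hge
      intro τ hτ
      rw [map_sub, map_inv₀] at hτ
      have ht0 : τ ζ ≠ 0 := by simpa using h0
      have : (τ ζ - ζ) * (τ ζ - -ζ⁻¹) = 0 := by
        field_simp at hτ ⊢
        linear_combination hτ
      rcases mul_eq_zero.mp this with h | h
      · rw [hext τ 1 (sub_eq_zero.mp h)]; exact one_mem _
      · rw [hext τ σ ((sub_eq_zero.mp h).trans hs.symm)]; exact hσ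
    · apply hle
      intro τ hτ
      rcases hcases τ hτ with h | h | h
      · simp [h]
      · exact absurd ⟨τ, hτ, h⟩ hA
      · simp [h, inv_neg]; ring
  left
  rw [eq_top_iff, ← htop]
  apply hle
  intro τ hτ
  rcases hcases τ hτ with h | h | h
  · simp [h]
  · exact absurd ⟨τ, hτ, h⟩ hA
  · exact absurd ⟨τ, hτ, h⟩ hB

lemma aux_transfer {F E : Type*} [Field F] [CharZero F] [Field E] [Algebra F E]
    (r : ℕ) (hr : 3 ≤ r) (ζ : E) (hζ : IsPrimitiveRoot ζ (2 ^ r))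
    (hirr : Irreducible (Polynomial.cyclotomic (2 ^ r) F))
    (K : IntermediateField F E) (h1 : K ≤ F⟮ζ⟯) (h2 : ¬ K ≤ F⟮ζ ^ 2⟯) :
    K = F⟮ζ⟯ ∨ K = F⟮ζ + ζ⁻¹⟯ ∨ K = F⟮ζ - ζ⁻¹⟯ := by
  have : NeZero (2 ^ r) := ⟨by positivity⟩
  set z : F⟮ζ⟯ := AdjoinSimple.gen F ζ with hz
  have hzz : (z : E) = ζ := AdjoinSimple.coe_gen F ζ
  have hzp : IsPrimitiveRoot z (2 ^ r) := by
    apply IsPrimitiveRoot.of_map_of_injective (f := algebraMap F⟮ζ⟯ E) (by exact hζ)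
      (algebraMap F⟮ζ⟯ E).injective
  have hcyc : IsCyclotomicExtension {2 ^ r} F F⟮ζ⟯ := (IntermediateField.isCyclotomicExtension_singleton_iff_eq_adjoin _ _ _ _ hζ).mpr rfl
  have hfd : FiniteDimensional F F⟮ζ⟯ := IsCyclotomicExtension.finiteDimensional {2 ^ r} F _
  have hgal : IsGalois F F⟮ζ⟯ := IsCyclotomicExtension.isGalois {2 ^ r} F _
  have hcard : ∀ σ : F⟮ζ⟯ ≃ₐ[F] F⟮ζ⟯, ∃ n : ℕ, σ ^ (2 ^ n) = 1 := by
    intro σ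
    refine ⟨r - 1, ?_⟩
    have : Nat.card (F⟮ζ⟯ ≃ₐ[F] F⟮ζ⟯) = 2 ^ (r - 1) := by
      rw [IsGalois.card_aut_eq_finrank, IsCyclotomicExtension.finrank (n := 2 ^ r) _
        hirr,
        Nat.totient_prime_pow Nat.prime_two (by omega)]
      simp
    rw [← this]
    exact pow_card_eq_one'
  have htop : F⟮z⟯ = ⊤ := by
    apply IntermediateField.lift_injective
    rw [lift_adjoin_simple, lift_top, hzz]
  have hl : lift (restrict h1) = K := lift_restrict h1
  rw [← hl]
  have hlift : ∀ x : F⟮ζ⟯, lift F⟮x⟯ = F⟮(x : E)⟯ := fun x => lift_adjoin_simple _ _ _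
  have hn : ¬ restrict h1 ≤ F⟮z ^ 2⟯ := by
    intro h
    apply h2
    rw [← hl]
    have : lift F⟮z ^ 2⟯ = F⟮ζ ^ 2⟯ := by rw [hlift]; simp [hzz]
    rw [← this]
    exact IntermediateField.map_mono _ h
  rcases aux_main r hr z hzp htop hcard (restrict h1) hn with h | h | h
  · left; rw [h, lift_top]
  · right; left; rw [h, hlift]; simp [hzz]
  · right; right; rw [h, hlift]; simp [hzz]

theorem subfields_of_conductor_two_pow
    (r : ℕ) (hr : 3 ≤ r) (ζ : ℂ) (hζ : IsPrimitiveRoot ζ (2 ^ r))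
    (K : IntermediateField ℚ ℂ) (h1 : K ≤ ℚ⟮ζ⟯) (h2 : ¬ K ≤ ℚ⟮ζ ^ 2⟯) :
    K = ℚ⟮ζ⟯ ∨ K = ℚ⟮ζ + ζ⁻¹⟯ ∨ K = ℚ⟮ζ - ζ⁻¹⟯ := by
  exact aux_transfer r hr ζ hζ (Polynomial.cyclotomic.irreducible_rat (by positivity)) K h1 h2
end

section
/- Let r ≥ 3, let ζ be a primitive 2^r-th root of unity, and let K = ℚ(ζ − ζ^{-1}), a field of degree n = 2^{r−2} over ℚ with D_K the absolute value of its discriminant. Then M(K) ≤ 2^{-n} · (2n − 1)^{n/2}. -/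
open NumberField IntermediateField

lemma sum_prim_pow (r : ℕ) (hr : 1 ≤ r) (ζ : ℂ) (hζ : IsPrimitiveRoot ζ (2 ^ r)) (k : ℤ)
    (hk : k ≠ 0) (hk2 : |k| < 2 ^ (r - 1)) :
    ∑ z ∈ primitiveRoots (2 ^ r) ℂ, z ^ k = 0 := by
  obtain ⟨s, rfl⟩ : ∃ s, r = s + 1 := ⟨r - 1, by omega⟩
  have hζ0 : ζ ≠ 0 := hζ.ne_zero (by positivity)
  have char : ∀ z : ℂ, z ∈ primitiveRoots (2 ^ (s + 1)) ℂ ↔ z ^ (2 ^ s) = -1 := by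
    intro z
    rw [mem_primitiveRoots (by positivity)]
    constructor
    · intro h
      have h2 := h.pow (by positivity) (pow_succ 2 s)
      exact h2.eq_neg_one_of_two_right
    · intro h
      have := orderOf_eq_prime_pow (x := z) (p := 2) (n := s) (by rw [h]; norm_num)
        (by rw [pow_succ, pow_mul, h]; norm_num)
      rw [← this]; exact IsPrimitiveRoot.orderOf z
  have key : ∑ z ∈ primitiveRoots (2 ^ (s + 1)) ℂ, z ^ k
      = ∑ z ∈ primitiveRoots (2 ^ (s + 1)) ℂ, (ζ ^ 2 * z) ^ k := by
    symm
    refine Finset.sum_bij (fun z _ => ζ ^ 2 * z) ?_ ?_ ?_ ?_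
    · intro z hz
      rw [char] at hz ⊢
      rw [mul_pow, hz, ← pow_mul, mul_comm 2, ← pow_succ, hζ.pow_eq_one, one_mul]
    · intro a _ b _ h
      exact mul_left_cancel₀ (pow_ne_zero 2 hζ0) h
    · intro z hz
      refine ⟨(ζ ^ 2)⁻¹ * z, ?_, ?_⟩
      · rw [char] at hz ⊢
        rw [mul_pow, hz, inv_pow, ← pow_mul, mul_comm 2, ← pow_succ, hζ.pow_eq_one]; simp
      · field_simp
    · intro z _; rfl
  have hu : (ζ ^ 2) ^ k ≠ 1 := by
    intro h
    have : ζ ^ (2 * k) = 1 := by rw [zpow_mul]; exact_mod_cast h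
    rw [hζ.zpow_eq_one_iff_dvd] at this
    rw [show ((2 ^ (s + 1) : ℕ) : ℤ) = 2 * 2 ^ s by push_cast; ring] at this
    have := Int.dvd_of_mul_dvd_mul_left (a := 2) (by norm_num) this
    have := Int.eq_zero_of_abs_lt_dvd this (by simpa using hk2)
    exact hk this
  simp_rw [mul_zpow] at key
  rw [← Finset.mul_sum] at key
  have := sub_eq_zero.mpr key
  have h3 : (1 - (ζ ^ 2) ^ k) * ∑ z ∈ primitiveRoots (2 ^ (s + 1)) ℂ, z ^ k = 0 := by
    rw [sub_mul, one_mul]; exact this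
  rcases mul_eq_zero.mp h3 with h | h
  · exact absurd (sub_eq_zero.mp h).symm hu
  · exact h

lemma parseval_s7 (r : ℕ) (hr : 1 ≤ r) (ζ : ℂ) (hζ : IsPrimitiveRoot ζ (2 ^ r)) (b : ℕ → ℚ) :
    ∑ z ∈ primitiveRoots (2 ^ r) ℂ, ‖∑ i ∈ Finset.range (2 ^ (r - 1)), (b i : ℂ) * z ^ i‖ ^ 2
      = 2 ^ (r - 1) * ∑ i ∈ Finset.range (2 ^ (r - 1)), ((b i : ℝ)) ^ 2 := by
  have hcard : ((primitiveRoots (2 ^ r) ℂ).card : ℂ) = 2 ^ (r - 1) := by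
    rw [hζ.card_primitiveRoots, Nat.totient_prime_pow Nat.prime_two (by omega)]
    simp
  have h1 : ∀ z ∈ primitiveRoots (2 ^ r) ℂ,
      (((‖∑ i ∈ Finset.range (2 ^ (r - 1)), (b i : ℂ) * z ^ i‖ ^ 2 : ℝ)) : ℂ) =
      ∑ i ∈ Finset.range (2 ^ (r - 1)), ∑ j ∈ Finset.range (2 ^ (r - 1)),
        (b i : ℂ) * (b j : ℂ) * z ^ ((i : ℤ) - j) := by
    intro z hz
    have hz' := (mem_primitiveRoots (by positivity)).mp hz
    have hz0 : z ≠ 0 := hz'.ne_zero (by positivity)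
    have hc : (starRingEnd ℂ) z = z⁻¹ :=
      (Complex.inv_eq_conj (hz'.norm'_eq_one (by positivity))).symm
    push_cast
    rw [← Complex.mul_conj', map_sum, Finset.sum_mul_sum]
    refine Finset.sum_congr rfl fun i _ => Finset.sum_congr rfl fun j _ => ?_
    rw [map_mul, map_pow, hc, zpow_sub₀ hz0, map_ratCast]
    simp only [zpow_natCast, inv_pow]
    field_simp
  have h2 : (((∑ z ∈ primitiveRoots (2 ^ r) ℂ,
      ‖∑ i ∈ Finset.range (2 ^ (r - 1)), (b i : ℂ) * z ^ i‖ ^ 2 : ℝ)) : ℂ)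
      = ((2 ^ (r - 1) * ∑ i ∈ Finset.range (2 ^ (r - 1)), ((b i : ℝ)) ^ 2 : ℝ) : ℂ) := by
    rw [Complex.ofReal_sum, Finset.sum_congr rfl h1, Finset.sum_comm]
    push_cast
    rw [Finset.mul_sum]
    refine Finset.sum_congr rfl fun i hi => ?_
    rw [Finset.sum_comm, Finset.sum_eq_single i]
    · simp [hcard]; ring
    · intro j hj hji
      rw [← Finset.mul_sum, sum_prim_pow r hr ζ hζ, mul_zero]
      · omega
      · rw [Finset.mem_range] at hi hj
        have hi' : (i : ℤ) < 2 ^ (r - 1) := by exact_mod_cast hi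
        have hj' : (j : ℤ) < 2 ^ (r - 1) := by exact_mod_cast hj
        rw [abs_lt]; constructor <;> omega
    · intro h; exact absurd hi h
  exact_mod_cast h2

lemma prod_bound {ι : Type*} (s : Finset ι) (N : ℕ) (hN : s.card = N) (hN0 : 0 < N)
    (f : ι → ℝ) (hf : ∀ i ∈ s, 0 ≤ f i) (B : ℝ) (hB : ∑ i ∈ s, f i ≤ N * B) :
    ∏ i ∈ s, f i ≤ B ^ N := by
  have hN' : (0:ℝ) < N := by exact_mod_cast hN0
  have h := Real.geom_mean_le_arith_mean s (fun _ => 1) f (by simp) (by simp [hN, hN0]) hf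
  simp only [Real.rpow_one, Finset.sum_const, hN, nsmul_eq_mul, mul_one, one_mul] at h
  have h0 : 0 ≤ ∏ i ∈ s, f i := Finset.prod_nonneg hf
  have h2 : (∏ i ∈ s, f i) ^ ((N : ℝ)⁻¹) ≤ B :=
    h.trans (by rw [div_le_iff₀ hN']; linarith)
  calc ∏ i ∈ s, f i = ((∏ i ∈ s, f i) ^ ((N : ℝ)⁻¹)) ^ N :=
        (Real.rpow_inv_natCast_pow h0 hN0.ne').symm
    _ ≤ B ^ N := pow_le_pow_left₀ (by positivity) h2 N

lemma norm_bound (r : ℕ) (hr : 3 ≤ r) {L : Type*} [Field L] [NumberField L]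
    [IsCyclotomicExtension {2 ^ r} ℚ L] (ζ : L) (hζ : IsPrimitiveRoot ζ (2 ^ r)) (b : ℕ → ℚ)
    (B : ℝ) (hB : ∑ i ∈ Finset.range (2 ^ (r - 1)), ((b i : ℝ)) ^ 2 ≤ B) :
    |((Algebra.norm ℚ (∑ i ∈ Finset.range (2 ^ (r - 1)), (b i : L) * ζ ^ i) : ℚ) : ℝ)|
      ≤ B ^ (2 ^ (r - 2)) := by
  have hB0 : 0 ≤ B := le_trans (Finset.sum_nonneg fun i _ => sq_nonneg _) hB
  have hirr : Irreducible (Polynomial.cyclotomic (2 ^ r) ℚ) :=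
    Polynomial.cyclotomic.irreducible_rat (by positivity)
  set x := ∑ i ∈ Finset.range (2 ^ (r - 1)), (b i : L) * ζ ^ i with hx
  have h1 := Algebra.norm_eq_prod_embeddings ℚ ℂ x
  have h2 : ∏ σ : L →ₐ[ℚ] ℂ, σ x = ∏ z ∈ primitiveRoots (2 ^ r) ℂ,
      ∑ i ∈ Finset.range (2 ^ (r - 1)), (b i : ℂ) * z ^ i := by
    rw [← Finset.prod_coe_sort (primitiveRoots (2 ^ r) ℂ)
      (fun z => ∑ i ∈ Finset.range (2 ^ (r - 1)), (b i : ℂ) * z ^ i)]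
    refine Fintype.prod_equiv (hζ.embeddingsEquivPrimitiveRoots ℂ hirr) _ _ fun σ => ?_
    simp [hx, map_sum]
  rw [h2] at h1
  have h3 : |((Algebra.norm ℚ x : ℚ) : ℝ)| = ∏ z ∈ primitiveRoots (2 ^ r) ℂ,
      ‖∑ i ∈ Finset.range (2 ^ (r - 1)), (b i : ℂ) * z ^ i‖ := by
    rw [← norm_prod, ← h1]
    simp
  have hζC := Complex.isPrimitiveRoot_exp (2 ^ r) (by positivity)
  have hcard : (primitiveRoots (2 ^ r) ℂ).card = 2 ^ (r - 1) := by
    rw [hζC.card_primitiveRoots, Nat.totient_prime_pow Nat.prime_two (by omega)]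
    simp
  have h4 := prod_bound (primitiveRoots (2 ^ r) ℂ) (2 ^ (r - 1)) hcard (by positivity)
    (fun z => ‖∑ i ∈ Finset.range (2 ^ (r - 1)), (b i : ℂ) * z ^ i‖ ^ 2)
    (fun _ _ => by positivity) B (by
      rw [parseval_s7 r (by omega) _ hζC b]; push_cast; gcongr)
  rw [Finset.prod_pow, ← h3] at h4
  refine le_of_sq_le_sq ?_ (by positivity)
  rw [← pow_mul, ← pow_succ, show r - 2 + 1 = r - 1 by omega]
  exact h4

/-- the integral elements `ζ^j + (-ζ)^(-j)` -/
def vv {K : Type*} [Field K] (η : K) : ℕ → K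
  | 0 => 2
  | 1 => η
  | (j + 2) => η * vv η (j + 1) + vv η j

lemma vv_integral {K : Type*} [Field K] (η : K) (h : IsIntegral ℤ η) :
    ∀ j, IsIntegral ℤ (vv η j) ∧ IsIntegral ℤ (vv η (j + 1)) := by
  intro j
  induction j with
  | zero =>
    refine ⟨?_, h⟩
    have : IsIntegral ℤ (algebraMap ℤ K 2) := isIntegral_algebraMap
    simpa [vv] using this
  | succ j ih => exact ⟨ih.2, (h.mul ih.2).add ih.1⟩

lemma vv_map {K L : Type*} [Field K] [Field L] [Algebra K L] (η : K) (ζ : L) (h0 : ζ ≠ 0)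
    (h : algebraMap K L η = ζ - ζ⁻¹) :
    ∀ j, algebraMap K L (vv η j) = ζ ^ j + (-ζ⁻¹) ^ j ∧
      algebraMap K L (vv η (j + 1)) = ζ ^ (j + 1) + (-ζ⁻¹) ^ (j + 1) := by
  intro j
  induction j with
  | zero => refine ⟨by simp [vv, one_add_one_eq_two, map_ofNat (algebraMap K L) 2], by simp [vv, h]; ring⟩
  | succ j ih =>
    refine ⟨ih.2, ?_⟩
    rw [vv, map_add, map_mul, ih.1, ih.2, h]
    have : ζ * ζ⁻¹ = 1 := mul_inv_cancel₀ h0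
    simp only [pow_succ]
    linear_combination (-ζ ^ j - (-ζ⁻¹) ^ j) * this

lemma span_top {K : Type*} [Field K] [CharZero K] (η : K) (n : ℕ) (hn : 2 ≤ n)
    (hη : Algebra.adjoin ℚ {η} = ⊤) (hv : vv η n = 0) :
    Submodule.span ℚ (Set.range fun j : Fin n => vv η j) = ⊤ := by
  set W := Submodule.span ℚ (Set.range fun j : Fin n => vv η j) with hW
  have hmem : ∀ j, j < n → vv η j ∈ W := fun j hj => Submodule.subset_span ⟨⟨j, hj⟩, rfl⟩
  have hmem' : ∀ j, j ≤ n → vv η j ∈ W := by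
    intro j hj
    rcases hj.lt_or_eq with h | h
    · exact hmem j h
    · rw [h, hv]; exact W.zero_mem
  have hmul : ∀ y ∈ W, η * y ∈ W := by
    intro y hy
    induction hy using Submodule.span_induction with
    | mem y hy =>
      obtain ⟨⟨j, hj⟩, rfl⟩ := hy
      rcases j with _ | j
      · have : η * vv η 0 = (2 : ℚ) • vv η 1 := by
          simp [vv, Algebra.smul_def]; ring
        change η * vv η 0 ∈ W
        rw [this]
        exact W.smul_mem _ (hmem 1 (by omega))
      · have : η * vv η (j + 1) = vv η (j + 2) - vv η j := by
          simp [vv]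
        change η * vv η (j + 1) ∈ W
        rw [this]
        exact W.sub_mem (hmem' _ (by omega)) (hmem' _ (by omega))
    | zero => simp
    | add a b _ _ ha hb => rw [mul_add]; exact W.add_mem ha hb
    | smul c a _ ha => rw [mul_smul_comm]; exact W.smul_mem c ha
  have h1 : (1 : K) ∈ W := by
    have : (1 : K) = (2⁻¹ : ℚ) • vv η 0 := by
      simp [vv, Algebra.smul_def]
    rw [this]; exact W.smul_mem _ (hmem 0 (by omega))
  have hmul2 : ∀ a : K, ∀ y ∈ W, a * y ∈ W := by
    intro a
    have ha : a ∈ Algebra.adjoin ℚ {η} := by rw [hη]; trivial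
    induction ha using Algebra.adjoin_induction with
    | mem x hx => rw [Set.mem_singleton_iff.mp hx]; exact hmul
    | algebraMap q => intro y hy; rw [← Algebra.smul_def]; exact W.smul_mem _ hy
    | add a b _ _ ha hb => intro y hy; rw [add_mul]; exact W.add_mem (ha y hy) (hb y hy)
    | mul a b _ _ ha hb => intro y hy; rw [mul_assoc]; exact ha _ (hb y hy)
  rw [eq_top_iff]
  intro a _
  simpa using hmul2 a 1 h1

lemma coeffs {L : Type*} [Field L] [CharZero L] (m : ℕ) (ζ : L)
    (hζ : ζ ^ (2 * (m + 1)) = -1) (e : ℕ → ℚ) (he : ∀ i, |e i| ≤ 1 / 2) :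
    ∃ b : ℕ → ℚ, (∑ i ∈ Finset.range (2 * (m + 1)), ((b i : ℝ)) ^ 2 ≤ (2 * (m + 1) - 1) / 4) ∧
      ∑ i ∈ Finset.range (2 * (m + 1)), (b i : L) * ζ ^ i =
        (e 0 : L) + ∑ j ∈ Finset.range m, (e (j + 1) : L) * (ζ ^ (j + 1) + (-ζ⁻¹) ^ (j + 1)) := by
  have h0 : ζ ≠ 0 := by rintro rfl; simp at hζ
  have he2 : ∀ i, ((e i : ℚ) : ℝ) ^ 2 ≤ 1 / 4 := by
    intro i
    have : (e i) ^ 2 ≤ 1 / 4 := by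
      have := abs_le.mp (he i); nlinarith
    have : (((e i) ^ 2 : ℚ) : ℝ) ≤ ((1 / 4 : ℚ) : ℝ) := by exact_mod_cast this
    push_cast at this; exact this
  let b : ℕ → ℚ := fun i => if i < m + 1 then e i else if i = m + 1 then 0 else
    -(-1) ^ i * e (2 * (m + 1) - i)
  have hb1 : ∀ i, i < m + 1 → b i = e i := fun i hi => if_pos hi
  have hb2 : b (m + 1) = 0 := by simp [b]
  have hb3 : ∀ i, i < m → b (m + 1 + (i + 1)) = -(-1) ^ (m + 1 + (i + 1)) * e (m - i) := by
    intro i hi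
    simp only [b]
    rw [if_neg (by omega), if_neg (by omega)]
    congr 2; omega
  refine ⟨b, ?_, ?_⟩
  · rw [two_mul, Finset.sum_range_add, Finset.sum_range_succ' (fun x => (b (m + 1 + x) : ℝ) ^ 2)]
    have s1 : ∑ i ∈ Finset.range (m + 1), (b i : ℝ) ^ 2 ≤ (m + 1) * (1 / 4) := by
      calc _ ≤ ∑ i ∈ Finset.range (m + 1), (1 / 4 : ℝ) := by
            refine Finset.sum_le_sum fun i hi => ?_
            rw [hb1 i (Finset.mem_range.mp hi)]; exact he2 i
        _ = _ := by simp
    have s2 : ∑ i ∈ Finset.range m, (b (m + 1 + (i + 1)) : ℝ) ^ 2 ≤ m * (1 / 4) := by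
      calc _ ≤ ∑ i ∈ Finset.range m, (1 / 4 : ℝ) := by
            refine Finset.sum_le_sum fun i hi => ?_
            rw [hb3 i (Finset.mem_range.mp hi)]
            push_cast
            rw [mul_pow, neg_sq, ← pow_mul, mul_comm _ 2, pow_mul]
            simpa using he2 (m - i)
        _ = _ := by simp
    rw [add_zero, hb2]
    push_cast
    linarith
  · rw [two_mul, Finset.sum_range_add, Finset.sum_range_succ' (fun x => (b (m + 1 + x) : L) * _),
      add_zero, hb2, Finset.sum_range_succ' (fun x => (b x : L) * _), hb1 0 (by omega)]
    have t : ∑ i ∈ Finset.range m, (b (m + 1 + (i + 1)) : L) * ζ ^ (m + 1 + (i + 1)) =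
        ∑ j ∈ Finset.range m, (e (j + 1) : L) * (-ζ⁻¹) ^ (j + 1) := by
      rw [← Finset.sum_range_reflect]
      refine Finset.sum_congr rfl fun j hj => ?_
      have hj := Finset.mem_range.mp hj
      rw [hb3 _ (by omega), show m - (m - 1 - j) = j + 1 by omega]
      set k := m + 1 + (m - 1 - j + 1) with hk
      have hkj : k + (j + 1) = 2 * (m + 1) := by omega
      have hz : ζ ^ k * ζ ^ (j + 1) = -1 := by rw [← pow_add, hkj, hζ]
      have hpar : ((-1 : L)) ^ k * (-1) ^ (j + 1) = 1 := by
        rw [← pow_add, hkj, pow_mul]; simp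
      have hsq : ((-1 : L)) ^ (j + 1) * (-1) ^ (j + 1) = 1 := by
        rw [← mul_pow]; simp
      have e1 : ζ ^ k = - (ζ⁻¹) ^ (j + 1) := by
        rw [inv_pow]
        have := pow_ne_zero (j + 1) h0
        field_simp
        exact hz
      have e2 : ((-1 : L)) ^ k = (-1) ^ (j + 1) := by
        linear_combination (-1) ^ (j + 1) * hpar - (-1) ^ k * hsq
      push_cast
      rw [neg_pow ζ⁻¹, e1, e2]; ring
    rw [t]
    rw [Finset.sum_congr rfl fun j hj => by
      rw [hb1 (j + 1) (by have := Finset.mem_range.mp hj; omega)]]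
    simp only [mul_add, Finset.sum_add_distrib]
    simp; ring

lemma finrank_le_two {K L : Type*} [Field K] [NumberField K] [Field L] [NumberField L]
    [Algebra K L] (ζ : L) (h0 : ζ ≠ 0) (hζ : Algebra.adjoin ℚ {ζ} = ⊤) (η : K)
    (hη : algebraMap K L η = ζ - ζ⁻¹) : Module.finrank K L ≤ 2 := by
  have htop : K⟮ζ⟯ = ⊤ := by
    rw [eq_top_iff]
    intro a _
    have ha : a ∈ Algebra.adjoin ℚ {ζ} := by rw [hζ]; trivial
    induction ha using Algebra.adjoin_induction with
    | mem x hx => rw [Set.mem_singleton_iff.mp hx]; exact mem_adjoin_simple_self K ζ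
    | algebraMap q =>
      rw [eq_ratCast]
      exact SubfieldClass.ratCast_mem _ q
    | add a b _ _ ha hb => exact add_mem (ha trivial) (hb trivial)
    | mul a b _ _ ha hb => exact mul_mem (ha trivial) (hb trivial)
  have hint : IsIntegral K ζ := IsIntegral.of_finite K ζ
  rw [← IntermediateField.finrank_top' (F := K) (E := L), ← htop,
    IntermediateField.adjoin.finrank hint]
  have hd : minpoly K ζ ∣ (Polynomial.X ^ 2 + Polynomial.C (-η) * Polynomial.X
      + Polynomial.C (-1)) := by
    apply minpoly.dvd
    simp [hη]
    field_simp
    ring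
  have hdeg : (Polynomial.X ^ 2 + Polynomial.C (-η) * Polynomial.X
      + Polynomial.C (-1)).natDegree = 2 := by
    have := Polynomial.natDegree_quadratic (a := (1 : K)) (b := -η) (c := -1) one_ne_zero
    rwa [Polynomial.C_1, one_mul] at this
  rw [← hdeg]
  refine Polynomial.natDegree_le_of_dvd hd ?_
  intro h
  rw [h] at hdeg
  simp at hdeg

lemma main_abs (r : ℕ) (hr : 3 ≤ r) {K L : Type*} [Field K] [NumberField K] [Field L]
    [NumberField L] [Algebra K L] [IsCyclotomicExtension {2 ^ r} ℚ L] (ζ : L)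
    (hζ : IsPrimitiveRoot ζ (2 ^ r)) (η : K) (hη : algebraMap K L η = ζ - ζ⁻¹)
    (htop : Algebra.adjoin ℚ {η} = ⊤) (x : K) :
    ∃ c : 𝓞 K, |((Algebra.norm ℚ (x - (c : K)) : ℚ) : ℝ)| ^ 2 ≤
      ((2 * (2 : ℝ) ^ (r - 2) - 1) / 4) ^ (2 ^ (r - 2)) := by
  have hN : 2 ^ (r - 1) = 2 * 2 ^ (r - 2) := by
    rw [← pow_succ']; congr 1; omega
  have h0 : ζ ≠ 0 := hζ.ne_zero (by positivity)
  have hneg : ζ ^ (2 ^ (r - 1)) = -1 := by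
    have h2 := hζ.pow (by positivity) (show 2 ^ r = 2 ^ (r - 1) * 2 by
      rw [← pow_succ]; congr 1; omega)
    exact h2.eq_neg_one_of_two_right
  have hn2 : 2 ≤ 2 ^ (r - 2) := by
    calc 2 = 2 ^ 1 := rfl
      _ ≤ 2 ^ (r - 2) := Nat.pow_le_pow_right (by norm_num) (by omega)
  have heven : Even (2 ^ (r - 2)) := Nat.even_pow.mpr ⟨even_two, by omega⟩
  have hv0 : vv η (2 ^ (r - 2)) = 0 := by
    apply (algebraMap K L).injective
    rw [(vv_map η ζ h0 hη _).1, map_zero, heven.neg_pow, inv_pow]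
    have := pow_ne_zero (2 ^ (r - 2)) h0
    field_simp
    rw [← pow_mul, mul_comm, ← hN, hneg]; ring
  have hspan := span_top η _ hn2 htop hv0
  have hintη : IsIntegral ℤ η := by
    have hz : IsIntegral ℤ ζ := hζ.isIntegral (by positivity)
    have hz' : IsIntegral ℤ ζ⁻¹ := hζ.inv.isIntegral (by positivity)
    have := hz.sub hz'
    rw [← hη] at this
    exact (isIntegral_algebraMap_iff (algebraMap K L).injective).mp this
  have hK : Module.finrank ℚ K ≤ 2 ^ (r - 2) := by
    have := finrank_range_le_card (R := ℚ) (fun j : Fin (2 ^ (r - 2)) => vv η j)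
    rw [Set.finrank, hspan, finrank_top, Fintype.card_fin] at this
    exact this
  have hadj := IsCyclotomicExtension.adjoin_primitive_root_eq_top (A := ℚ) hζ
  have hKL := finrank_le_two ζ h0 hadj η hη
  have hL : Module.finrank ℚ L = 2 ^ (r - 1) := by
    rw [IsCyclotomicExtension.Rat.finrank (2 ^ r), Nat.totient_prime_pow Nat.prime_two (by omega)]
    simp
  have htower : Module.finrank ℚ K * Module.finrank K L = Module.finrank ℚ L :=
    Module.finrank_mul_finrank ℚ K L
  have hKL2 : Module.finrank K L = 2 := by
    rw [hL, hN] at htower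
    nlinarith
  -- coefficients
  have hx : x ∈ Submodule.span ℚ (Set.range fun j : Fin (2 ^ (r - 2)) => vv η j) := by
    rw [hspan]; trivial
  obtain ⟨a, ha⟩ := (Submodule.mem_span_range_iff_exists_fun ℚ).mp hx
  obtain ⟨m, hm⟩ : ∃ m, 2 ^ (r - 2) = m + 1 := ⟨2 ^ (r - 2) - 1, by omega⟩
  obtain ⟨a', ha'⟩ : ∃ a' : ℕ → ℚ, x = (a' 0 : K) +
      ∑ j ∈ Finset.range m, (a' (j + 1) : K) * vv η (j + 1) := by
    let A : ℕ → ℚ := fun j => if h : j < 2 ^ (r - 2) then a ⟨j, h⟩ else 0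
    have hA : x = ∑ j ∈ Finset.range (m + 1), (A j : K) * vv η j := by
      rw [← hm, Finset.sum_range, ← ha]
      refine Finset.sum_congr rfl fun j _ => ?_
      simp [A, Algebra.smul_def]
    refine ⟨fun j => if j = 0 then 2 * A 0 else A j, ?_⟩
    rw [hA, Finset.sum_range_succ']
    simp [vv]; ring
  let cK : K := (round (a' 0) : K) + ∑ j ∈ Finset.range m, (round (a' (j + 1)) : K) * vv η (j + 1)
  have hc : IsIntegral ℤ cK := by
    have hi : ∀ k : ℤ, IsIntegral ℤ (k : K) := fun k => by
      have : IsIntegral ℤ (algebraMap ℤ K k) := isIntegral_algebraMap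
      simpa using this
    exact (hi _).add (IsIntegral.sum _ fun j _ => (hi _).mul (vv_integral η hintη j).2)
  refine ⟨⟨cK, hc⟩, ?_⟩
  change |((Algebra.norm ℚ (x - cK) : ℚ) : ℝ)| ^ 2 ≤ _
  obtain ⟨b, hb, hb'⟩ := coeffs m ζ (by rw [← hm, ← hN, hneg]) (fun j => a' j - round (a' j))
    (fun j => abs_sub_round _)
  have hxc : algebraMap K L (x - cK) = ∑ i ∈ Finset.range (2 ^ (r - 1)), (b i : L) * ζ ^ i := by
    rw [hN, hm, hb', ha']
    simp only [cK, map_sub, map_add, map_sum, map_mul, map_ratCast, map_intCast,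
      (vv_map η ζ h0 hη _).2]
    push_cast
    simp only [sub_mul, Finset.sum_sub_distrib]
    ring
  have hnb := norm_bound r hr ζ hζ b ((2 * (2 : ℝ) ^ (r - 2) - 1) / 4) (by
    have hm' : (2 : ℝ) ^ (r - 2) = m + 1 := by exact_mod_cast hm
    rw [hN, hm, hm']; exact hb)
  rw [← hxc, ← Algebra.norm_norm (S := K), Algebra.norm_algebraMap, hKL2, map_pow] at hnb
  push_cast at hnb
  rwa [abs_pow] at hnb

theorem euclideanMinimum_adjoin_zeta_sub_zeta_inv_le
    (r : ℕ) (hr : 3 ≤ r) (ζ : ℂ) (hζ : IsPrimitiveRoot ζ (2 ^ r))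
    [NumberField ℚ⟮ζ - ζ⁻¹⟯] :
    euclideanMinimum ℚ⟮ζ - ζ⁻¹⟯ ≤
      (2 : ℝ)⁻¹ ^ (2 ^ (r - 2)) *
        ((2 * (2 : ℝ) ^ (r - 2) - 1) ^ (((2 : ℝ) ^ (r - 2)) / 2)) := by
  have hint : IsIntegral ℚ ζ := (hζ.isIntegral (by positivity)).tower_top
  have hint' : IsIntegral ℚ ζ⁻¹ := (hζ.inv.isIntegral (by positivity)).tower_top
  have hcyc : IsCyclotomicExtension {2 ^ r} ℚ ℚ⟮ζ⟯ := by
    change IsCyclotomicExtension {2 ^ r} ℚ (ℚ⟮ζ⟯).toSubalgebra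
    rw [IntermediateField.adjoin_simple_toSubalgebra_of_isAlgebraic hint.isAlgebraic]
    exact hζ.adjoin_isCyclotomicExtension ℚ
  have : FiniteDimensional ℚ ℚ⟮ζ⟯ := IntermediateField.adjoin.finiteDimensional hint
  have hNF : NumberField ℚ⟮ζ⟯ := { }
  have hle : ℚ⟮ζ - ζ⁻¹⟯ ≤ ℚ⟮ζ⟯ := by
    rw [adjoin_simple_le_iff]
    exact sub_mem (mem_adjoin_simple_self ℚ ζ) (inv_mem (mem_adjoin_simple_self ℚ ζ))
  let _ : Algebra ℚ⟮ζ - ζ⁻¹⟯ ℚ⟮ζ⟯ := (IntermediateField.inclusion hle).toRingHom.toAlgebra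
  have hζ' : IsPrimitiveRoot (AdjoinSimple.gen ℚ ζ) (2 ^ r) :=
    IsPrimitiveRoot.coe_submonoidClass_iff.mp hζ
  have htop : Algebra.adjoin ℚ {AdjoinSimple.gen ℚ (ζ - ζ⁻¹)} = ⊤ := by
    have := (IntermediateField.adjoin.powerBasis (hint.sub hint')).adjoin_gen_eq_top
    rwa [IntermediateField.adjoin.powerBasis_gen] at this
  have hn1 : (1 : ℝ) ≤ 2 ^ (r - 2) := one_le_pow₀ (by norm_num)
  set B : ℝ := 2 * (2 : ℝ) ^ (r - 2) - 1 with hBdef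
  have hB0 : 0 ≤ B := by linarith
  unfold euclideanMinimum
  refine ciSup_le fun x => ?_
  obtain ⟨c, hc⟩ := main_abs r hr (AdjoinSimple.gen ℚ ζ) hζ' (AdjoinSimple.gen ℚ (ζ - ζ⁻¹))
    (by apply Subtype.ext; rfl) htop x
  refine (ciInf_le ⟨0, by rintro _ ⟨c, rfl⟩; positivity⟩ c).trans ?_
  refine le_of_sq_le_sq (hc.trans_eq ?_) (by positivity)
  rw [mul_pow, ← hBdef, ← Real.rpow_mul_natCast hB0]
  rw [show (2 : ℝ) ^ (r - 2) / 2 * ((2 : ℕ) : ℝ) = ((2 ^ (r - 2) : ℕ) : ℝ) by push_cast; ring,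
    Real.rpow_natCast, div_pow, ← pow_mul, mul_comm (2 ^ (r - 2)) 2, pow_mul]
  rw [show ((2 : ℝ)⁻¹ ^ 2) = 4⁻¹ by norm_num, inv_pow]
  ring
end
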